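/- arXiv:2309.03985 — 3 statements merged into one kernel-verified Lean document; each statement's English description precedes it below -/
import Mathlib

section
/- Let Γ be a countable abelian group, and let θ and σ be probability measures on Γ with finite Shannon entropy. Then for every k ≥ 1, H(θ^{*k} * σ) − H(σ) ≤ k·(H(θ * σ) − H(σ)), where θ^{*k} denotes the k-fold convolution of θ with itself. -/
/-- Shannon entropy (base 2) of a discrete probability measure given by a mass function. -/
noncomputable def shEnt {Γ : Type*} (θ : Γ → ℝ) : ℝ :=
  ∑' x, -(θ x * Real.logb 2 (θ x))

/-- Convolution of mass functions on a countable abelian group. -/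
noncomputable def convMass {Γ : Type*} [AddCommGroup Γ] (θ σ : Γ → ℝ) : Γ → ℝ :=
  fun x => ∑' y, θ y * σ (x - y)

/-- The `k`-fold self-convolution of a mass function (`k = 0` gives the Dirac mass at `0`). -/
noncomputable def convPow {Γ : Type*} [AddCommGroup Γ] [DecidableEq Γ] (θ : Γ → ℝ) :
    ℕ → Γ → ℝ
  | 0 => fun x => if x = 0 then 1 else 0
  | k + 1 => convMass θ (convPow θ k)

/-! Passing `p` and `q` through a channel `κ`, with outputs `pκ` and `qκ`, does not increase their
relative entropy: comparing `p a * κ a b` with `q a * κ a b * (pκ) b / (qκ) b` through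
`log r ≤ r - 1` gives `D(pκ ‖ qκ) ≤ D(p ‖ q)`. Averaging this over the components of a mixture gives
data processing for mutual information. Let `X, Z, Y` be independent with laws `p, q, r`, view
`X + Z` as a mixture of translates of `Z`, and let the channel be the addition of `Y`: the result is
the submodularity inequality `H(X + Z + Y) + H(Z) ≤ H(X + Z) + H(Z + Y)`. In the commutative case,
adding one more `θ`-distributed summand to `θ^{*k} * σ` therefore raises the entropy by at most
`H(θ * σ) - H(σ)`, and these increments are summed over `k`. -/

open scoped ENNReal

/-- The information content `-log t` of an event of probability `t`, in nats. It is `⊤` at `0`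
(so that no support conditions are needed) and is truncated to `0` for `1 ≤ t`. -/
noncomputable def surprisal (t : ℝ≥0∞) : ℝ≥0∞ :=
  (ENNReal.log t⁻¹).toENNReal

theorem surprisal_zero : surprisal 0 = ⊤ := by
  simp [surprisal]

theorem surprisal_one : surprisal 1 = 0 := by
  simp [surprisal]

theorem surprisal_eq_ofReal_neg_log {t : ℝ≥0∞} (ht₀ : t ≠ 0) (ht : t ≠ ⊤) :
    surprisal t = ENNReal.ofReal (-Real.log t.toReal) := by
  rw [surprisal, ENNReal.log_inv, ENNReal.log_pos_real ht₀ ht, ← EReal.coe_neg,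
    EReal.real_coe_toENNReal]

theorem surprisal_mul {a b : ℝ≥0∞} (ha : a ≤ 1) (hb : b ≤ 1) :
    surprisal (a * b) = surprisal a + surprisal b := by
  have ha_top : a ≠ ⊤ := ne_top_of_le_ne_top ENNReal.one_ne_top ha
  have hb_top : b ≠ ⊤ := ne_top_of_le_ne_top ENNReal.one_ne_top hb
  have hlog {t : ℝ≥0∞} (ht : t ≤ 1) : 0 ≤ ENNReal.log t⁻¹ := by simpa using ht
  rw [surprisal, ENNReal.mul_inv (.inr hb_top) (.inl ha_top), ENNReal.log_mul_add,
    EReal.toENNReal_add (hlog ha) (hlog hb), surprisal, surprisal]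

/-- The inequality `log r ≤ r - 1` at `r = b / a`, with the subtractions moved to the other side. -/
theorem surprisal_add_one_le {a b : ℝ≥0∞} (ha : a ≤ 1) :
    surprisal a + 1 ≤ surprisal b + b / a := by
  have ha_top : a ≠ ⊤ := ne_top_of_le_ne_top ENNReal.one_ne_top ha
  rcases eq_or_ne b 0 with rfl | hb₀
  · simp [surprisal_zero]
  rcases eq_or_ne a 0 with rfl | ha₀
  · simp [ENNReal.div_zero hb₀]
  rcases eq_or_ne b ⊤ with rfl | hb_top
  · simp [ENNReal.top_div_of_ne_top ha_top]
  have ha_pos : 0 < a.toReal := ENNReal.toReal_pos ha₀ ha_top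
  have hb_pos : 0 < b.toReal := ENNReal.toReal_pos hb₀ hb_top
  have hlog_a : 0 ≤ -Real.log a.toReal :=
    neg_nonneg.2 (Real.log_nonpos ha_pos.le (ENNReal.toReal_le_of_le_ofReal zero_le_one (by simpa)))
  have hlog : Real.log b.toReal - Real.log a.toReal ≤ b.toReal / a.toReal - 1 := by
    rw [← Real.log_div hb_pos.ne' ha_pos.ne']
    exact Real.log_le_sub_one_of_pos (div_pos hb_pos ha_pos)
  calc surprisal a + 1 = ENNReal.ofReal (-Real.log a.toReal + 1) := by
        rw [surprisal_eq_ofReal_neg_log ha₀ ha_top, ENNReal.ofReal_add hlog_a zero_le_one,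
          ENNReal.ofReal_one]
    _ ≤ ENNReal.ofReal (-Real.log b.toReal + b.toReal / a.toReal) :=
        ENNReal.ofReal_le_ofReal (by linarith)
    _ ≤ surprisal b + b / a := by
        rw [surprisal_eq_ofReal_neg_log hb₀ hb_top]
        refine ENNReal.ofReal_add_le.trans_eq ?_
        rw [ENNReal.ofReal_div_of_pos ha_pos, ENNReal.ofReal_toReal hb_top,
          ENNReal.ofReal_toReal ha_top]

theorem tsum_mul_surprisal_le {ι : Type*} {w a b : ι → ℝ≥0∞} (ha : ∀ i, a i ≤ 1)
    (hw : ∑' i, w i ≠ ⊤) (hratio : ∑' i, w i * (b i / a i) ≤ ∑' i, w i) :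
    ∑' i, w i * surprisal (a i) ≤ ∑' i, w i * surprisal (b i) := by
  refine (ENNReal.add_le_add_iff_right hw).1 ?_
  calc ∑' i, w i * surprisal (a i) + ∑' i, w i
      = ∑' i, w i * (surprisal (a i) + 1) := by
        simp only [mul_add, mul_one, ENNReal.tsum_add]
    _ ≤ ∑' i, w i * (surprisal (b i) + b i / a i) := by
        gcongr ∑' i, w i * ?_ with i
        exact surprisal_add_one_le (ha i)
    _ = ∑' i, w i * surprisal (b i) + ∑' i, w i * (b i / a i) := by
        simp only [mul_add, ENNReal.tsum_add]
    _ ≤ ∑' i, w i * surprisal (b i) + ∑' i, w i := by gcongr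

section Entropy

variable {α β γ : Type*}

/-- The cross entropy `-∑ p log q`, in nats. It equals the entropy of `p` plus the relative entropy
of `p` with respect to `q`, and is used in place of the latter to avoid subtracting in `ℝ≥0∞`. -/
noncomputable def pmfCrossEntropy (p q : PMF α) : ℝ≥0∞ :=
  ∑' a, p a * surprisal (q a)

/-- The Shannon entropy of `p`, in nats and with values in `ℝ≥0∞`, so that an infinite entropy is
recorded as `⊤`. -/
noncomputable def pmfEntropy (p : PMF α) : ℝ≥0∞ :=
  pmfCrossEntropy p p

theorem tsum_bind_mul (p : PMF α) (κ : α → PMF β) (F : β → ℝ≥0∞) :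
    ∑' b, p.bind κ b * F b = ∑' a, p a * ∑' b, κ a b * F b := by
  simp only [PMF.bind_apply, ← ENNReal.tsum_mul_right, ← ENNReal.tsum_mul_left, mul_assoc]
  exact ENNReal.tsum_comm

theorem tsum_map_mul (e : α → β) (p : PMF α) (F : β → ℝ≥0∞) :
    ∑' b, p.map e b * F b = ∑' a, p a * F (e a) := by
  rw [PMF.map, tsum_bind_mul]
  simp [PMF.pure_apply]

theorem pmfCrossEntropy_bind_left (p : PMF α) (κ : α → PMF β) (q : PMF β) :
    pmfCrossEntropy (p.bind κ) q = ∑' a, p a * pmfCrossEntropy (κ a) q :=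
  tsum_bind_mul p κ fun b => surprisal (q b)

theorem pmfEntropy_pure (a : α) : pmfEntropy (PMF.pure a) = 0 := by
  simp [pmfEntropy, pmfCrossEntropy, PMF.pure_apply, surprisal_one]

theorem pmf_map_apply_of_injective {e : α → β} (he : e.Injective) (p : PMF α) (a : α) :
    p.map e (e a) = p a := by
  rw [PMF.map_apply, tsum_eq_single a fun a' ha' => if_neg fun h => ha' (he h).symm, if_pos rfl]

theorem pmfEntropy_map_of_injective {e : α → β} (he : e.Injective) (p : PMF α) :
    pmfEntropy (p.map e) = pmfEntropy p := by
  simp only [pmfEntropy, pmfCrossEntropy, tsum_map_mul, pmf_map_apply_of_injective he]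

theorem tsum_mul_mul_bind_div_bind_le_one (p q : PMF α) (κ : α → PMF β) :
    ∑' a, ∑' b, κ a b * (q a * (p.bind κ b / q.bind κ b)) ≤ 1 :=
  calc ∑' a, ∑' b, κ a b * (q a * (p.bind κ b / q.bind κ b))
      = ∑' b, q.bind κ b * (p.bind κ b / q.bind κ b) := by
        rw [tsum_bind_mul]
        simp only [← ENNReal.tsum_mul_left, mul_left_comm]
    _ ≤ ∑' b, p.bind κ b := by
        gcongr with b
        exact ENNReal.mul_div_le
    _ = 1 := (p.bind κ).tsum_coe

theorem tsum_mul_mul_surprisal_mul (p : PMF α) (κ : α → PMF β) {u : α → ℝ≥0∞} {v : β → ℝ≥0∞}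
    (hu : ∀ a, u a ≤ 1) (hv : ∀ b, v b ≤ 1) :
    ∑' i : α × β, p i.1 * κ i.1 i.2 * surprisal (u i.1 * v i.2) =
      ∑' a, p a * surprisal (u a) + ∑' b, p.bind κ b * surprisal (v b) := by
  rw [tsum_bind_mul, ← ENNReal.tsum_add, ENNReal.tsum_prod']
  refine tsum_congr fun a => ?_
  simp only [surprisal_mul (hu _) (hv _), mul_add, ENNReal.tsum_add, mul_assoc,
    ENNReal.tsum_mul_left, ENNReal.tsum_mul_right, (κ a).tsum_coe, one_mul]

/-- Data processing for relative entropy, `D(pκ ‖ qκ) ≤ D(p ‖ q)`, with the two entropies moved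
across so that no subtraction occurs. -/
theorem pmfCrossEntropy_bind_add_pmfEntropy_le (p q : PMF α) (κ : α → PMF β) :
    pmfCrossEntropy (p.bind κ) (q.bind κ) + pmfEntropy p ≤
      pmfCrossEntropy p q + pmfEntropy (p.bind κ) := by
  have hw : ∑' i : α × β, p i.1 * κ i.1 i.2 = 1 := by
    rw [ENNReal.tsum_prod']
    simp [ENNReal.tsum_mul_left]
  have hratio : ∑' i : α × β, p i.1 * κ i.1 i.2 *
      (q i.1 * p.bind κ i.2 / (p i.1 * q.bind κ i.2)) ≤ 1 := by
    refine le_trans ?_ (tsum_mul_mul_bind_div_bind_le_one p q κ)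
    rw [ENNReal.tsum_prod']
    refine ENNReal.tsum_le_tsum fun a => ENNReal.tsum_le_tsum fun b => ?_
    calc p a * κ a b * (q a * p.bind κ b / (p a * q.bind κ b))
        = p a * (p a)⁻¹ * (κ a b * (q a * (p.bind κ b / q.bind κ b))) := by
          rw [div_eq_mul_inv, div_eq_mul_inv, ENNReal.mul_inv (.inr ((q.bind κ).apply_ne_top b))
            (.inl (p.apply_ne_top a))]
          ring
      _ ≤ κ a b * (q a * (p.bind κ b / q.bind κ b)) :=
          mul_le_of_le_one_left' (ENNReal.mul_inv_le_one _)
  have gibbs := tsum_mul_surprisal_le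
    (fun i : α × β => mul_le_one' (p.coe_le_one i.1) ((q.bind κ).coe_le_one i.2))
    (hw ▸ ENNReal.one_ne_top) (hratio.trans_eq hw.symm)
  rw [tsum_mul_mul_surprisal_mul p κ p.coe_le_one (q.bind κ).coe_le_one,
    tsum_mul_mul_surprisal_mul p κ q.coe_le_one (p.bind κ).coe_le_one] at gibbs
  rwa [add_comm]

/-- Data processing for mutual information: `H(mixture) - average H(components)` is the information
that the mixture carries about the index `a`, and the channel `η` can only decrease it. -/
theorem pmfEntropy_bind_bind_add_tsum_le (p : PMF α) (κ : α → PMF β) (η : β → PMF γ) :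
    pmfEntropy ((p.bind κ).bind η) + ∑' a, p a * pmfEntropy (κ a) ≤
      pmfEntropy (p.bind κ) + ∑' a, p a * pmfEntropy ((κ a).bind η) :=
  calc pmfEntropy ((p.bind κ).bind η) + ∑' a, p a * pmfEntropy (κ a)
      = ∑' a, p a * (pmfCrossEntropy ((κ a).bind η) ((p.bind κ).bind η) + pmfEntropy (κ a)) := by
        simp only [mul_add, ENNReal.tsum_add, ← pmfCrossEntropy_bind_left, ← PMF.bind_bind]
        rfl
    _ ≤ ∑' a, p a * (pmfCrossEntropy (κ a) (p.bind κ) + pmfEntropy ((κ a).bind η)) := by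
        gcongr ∑' a, p a * ?_ with a
        exact pmfCrossEntropy_bind_add_pmfEntropy_le _ _ _
    _ = pmfEntropy (p.bind κ) + ∑' a, p a * pmfEntropy ((κ a).bind η) := by
        simp only [mul_add, ENNReal.tsum_add, ← pmfCrossEntropy_bind_left]
        rfl

end Entropy

section Convolution

variable {Γ : Type*}

/-- The convolution of two probability mass functions: the law of the sum of independent random
variables with laws `p` and `q`. -/
noncomputable def pmfConv [Add Γ] (p q : PMF Γ) : PMF Γ :=
  p.bind fun x => q.map (x + ·)

/-- The `k`-fold self-convolution of a probability mass function, in parallel to `convPow`. -/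
noncomputable def pmfConvPow [AddZeroClass Γ] (p : PMF Γ) : ℕ → PMF Γ
  | 0 => PMF.pure 0
  | k + 1 => pmfConv p (pmfConvPow p k)

theorem pmfConv_comm [AddCommMagma Γ] (p q : PMF Γ) : pmfConv p q = pmfConv q p := by
  simp only [pmfConv, PMF.map, Function.comp_def]
  rw [PMF.bind_comm]
  simp only [add_comm]

theorem map_add_left_pmfConv [AddSemigroup Γ] (x : Γ) (p q : PMF Γ) :
    (pmfConv p q).map (x + ·) = pmfConv (p.map (x + ·)) q := by
  simp only [pmfConv, PMF.map_bind, PMF.bind_map, PMF.map_comp, Function.comp_def, add_assoc]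

theorem pmfConv_assoc [AddSemigroup Γ] (p q r : PMF Γ) :
    pmfConv (pmfConv p q) r = pmfConv p (pmfConv q r) := by
  conv_rhs => rw [pmfConv]
  simp only [map_add_left_pmfConv]
  simp only [pmfConv, PMF.bind_bind]

theorem pure_zero_pmfConv [AddZeroClass Γ] (p : PMF Γ) : pmfConv (PMF.pure 0) p = p := by
  simp only [pmfConv, PMF.pure_bind, zero_add]
  exact p.map_id

theorem pmfConv_pure_zero [AddZeroClass Γ] (p : PMF Γ) : pmfConv p (PMF.pure 0) = p := by
  simp only [pmfConv, PMF.pure_map, add_zero, PMF.bind_pure]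

/-- Data processing for the mixture of the translates `x + q` along `p`, with the addition of an
`r`-distributed variable as the channel. -/
theorem pmfEntropy_pmfConv_pmfConv_add_le [AddLeftCancelSemigroup Γ] (p q r : PMF Γ) :
    pmfEntropy (pmfConv (pmfConv p q) r) + pmfEntropy q ≤
      pmfEntropy (pmfConv p q) + pmfEntropy (pmfConv q r) := by
  have mixture : pmfEntropy (pmfConv (pmfConv p q) r) + ∑' x, p x * pmfEntropy (q.map (x + ·)) ≤
      pmfEntropy (pmfConv p q) + ∑' x, p x * pmfEntropy (pmfConv (q.map (x + ·)) r) :=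
    pmfEntropy_bind_bind_add_tsum_le p (fun x => q.map (x + ·)) fun z => r.map (z + ·)
  simpa only [← map_add_left_pmfConv, pmfEntropy_map_of_injective (add_right_injective _),
    ENNReal.tsum_mul_right, p.tsum_coe, one_mul] using mixture

theorem pmfEntropy_pmfConv_le [AddLeftCancelMonoid Γ] (p q : PMF Γ) :
    pmfEntropy (pmfConv p q) ≤ pmfEntropy p + pmfEntropy q := by
  simpa only [pmfConv_pure_zero, pure_zero_pmfConv, pmfEntropy_pure, add_zero] using
    pmfEntropy_pmfConv_pmfConv_add_le p (PMF.pure 0) q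

theorem pmfEntropy_pmfConvPow_pmfConv_add_le [AddCancelCommMonoid Γ] (p q : PMF Γ) (k : ℕ) :
    pmfEntropy (pmfConv (pmfConvPow p k) q) + k * pmfEntropy q ≤
      k * pmfEntropy (pmfConv p q) + pmfEntropy q := by
  induction k with
  | zero => simp [pmfConvPow, pure_zero_pmfConv]
  | succ k ih =>
    set r := pmfConv (pmfConvPow p k) q
    have hstep : pmfEntropy (pmfConv p r) + pmfEntropy q ≤
        pmfEntropy r + pmfEntropy (pmfConv p q) := by
      rw [pmfConv_comm p r, pmfConv_comm p q]
      exact pmfEntropy_pmfConv_pmfConv_add_le _ _ _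
    calc pmfEntropy (pmfConv (pmfConvPow p (k + 1)) q) + (k + 1 : ℕ) * pmfEntropy q
        = pmfEntropy (pmfConv p r) + pmfEntropy q + k * pmfEntropy q := by
          rw [pmfConvPow, pmfConv_assoc]
          push_cast
          ring
      _ ≤ pmfEntropy r + pmfEntropy (pmfConv p q) + k * pmfEntropy q := by gcongr
      _ = pmfEntropy r + k * pmfEntropy q + pmfEntropy (pmfConv p q) := by ring
      _ ≤ k * pmfEntropy (pmfConv p q) + pmfEntropy q + pmfEntropy (pmfConv p q) := by gcongr
      _ = (k + 1 : ℕ) * pmfEntropy (pmfConv p q) + pmfEntropy q := by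
          push_cast
          ring

end Convolution

section RealMassFunctions

variable {α Γ : Type*}

theorem exists_pmf_toReal_eq {θ : α → ℝ} (hθ0 : ∀ x, 0 ≤ θ x) (hθ1 : HasSum θ 1) :
    ∃ p : PMF α, (fun x => (p x).toReal) = θ := by
  have hsum : HasSum (fun x => ENNReal.ofReal (θ x)) 1 := by
    rw [ENNReal.summable.hasSum_iff, ← ENNReal.ofReal_tsum_of_nonneg hθ0 hθ1.summable, hθ1.tsum_eq,
      ENNReal.ofReal_one]
  exact ⟨⟨_, hsum⟩, funext fun x => ENNReal.toReal_ofReal (hθ0 x)⟩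

theorem mul_surprisal_self_eq_ofReal {t : ℝ≥0∞} (ht : t ≤ 1) :
    t * surprisal t =
      ENNReal.ofReal (Real.log 2 * -(t.toReal * Real.logb 2 t.toReal)) := by
  rcases eq_or_ne t 0 with rfl | ht₀
  · simp
  have ht_top : t ≠ ⊤ := ne_top_of_le_ne_top ENNReal.one_ne_top ht
  have hlog2 : Real.log 2 ≠ 0 := (Real.log_pos one_lt_two).ne'
  have hnats : Real.log 2 * -(t.toReal * Real.logb 2 t.toReal) =
      t.toReal * -Real.log t.toReal := by
    rw [Real.logb]
    field_simp
  rw [hnats, ENNReal.ofReal_mul ENNReal.toReal_nonneg, ENNReal.ofReal_toReal ht_top,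
    surprisal_eq_ofReal_neg_log ht₀ ht_top]

theorem toReal_pmfEntropy (p : PMF α) :
    (pmfEntropy p).toReal = Real.log 2 * shEnt fun x => (p x).toReal := by
  have hnonneg (x : α) : 0 ≤ Real.log 2 * -((p x).toReal * Real.logb 2 (p x).toReal) := by
    have hle : (p x).toReal ≤ 1 :=
      ENNReal.toReal_le_of_le_ofReal zero_le_one (by simp [p.coe_le_one])
    have hlogb := Real.logb_nonpos one_lt_two ENNReal.toReal_nonneg hle
    exact mul_nonneg (Real.log_nonneg one_le_two)
      (neg_nonneg.2 (mul_nonpos_of_nonneg_of_nonpos ENNReal.toReal_nonneg hlogb))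
  simp only [pmfEntropy, pmfCrossEntropy, mul_surprisal_self_eq_ofReal (p.coe_le_one _)]
  rw [ENNReal.tsum_toReal_eq fun _ => ENNReal.ofReal_ne_top, shEnt, ← tsum_mul_left]
  exact tsum_congr fun x => ENNReal.toReal_ofReal (hnonneg x)

theorem pmfEntropy_ne_top {p : PMF α}
    (hp : Summable fun x => -((p x).toReal * Real.logb 2 (p x).toReal)) : pmfEntropy p ≠ ⊤ := by
  simp only [pmfEntropy, pmfCrossEntropy, mul_surprisal_self_eq_ofReal (p.coe_le_one _)]
  exact (hp.mul_left _).tsum_ofReal_ne_top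

theorem pmfConv_apply [AddCommGroup Γ] (p q : PMF Γ) (x : Γ) :
    pmfConv p q x = ∑' y, p y * q (x - y) := by
  rw [pmfConv, PMF.bind_apply]
  refine tsum_congr fun y => ?_
  rw [← pmf_map_apply_of_injective (add_right_injective y) q (x - y), add_sub_cancel]

theorem convMass_toReal [AddCommGroup Γ] (p q : PMF Γ) :
    convMass (fun x => (p x).toReal) (fun x => (q x).toReal) =
      fun x => (pmfConv p q x).toReal := by
  funext x
  rw [pmfConv_apply, ENNReal.tsum_toReal_eq fun y =>
    ENNReal.mul_ne_top (p.apply_ne_top y) (q.apply_ne_top (x - y))]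
  simp only [convMass, ENNReal.toReal_mul]

theorem convPow_toReal [AddCommGroup Γ] [DecidableEq Γ] (p : PMF Γ) (k : ℕ) :
    convPow (fun x => (p x).toReal) k = fun x => (pmfConvPow p k x).toReal := by
  induction k with
  | zero =>
    funext x
    simp [convPow, pmfConvPow, PMF.pure_apply, apply_ite ENNReal.toReal]
  | succ k ih => rw [convPow, ih, convMass_toReal, pmfConvPow]

end RealMassFunctions

theorem stmt2_general {Γ : Type*} [AddCommGroup Γ] [DecidableEq Γ] (θ σ : Γ → ℝ)
    (hθ0 : ∀ x, 0 ≤ θ x) (hσ0 : ∀ x, 0 ≤ σ x)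
    (hθ1 : HasSum θ 1) (hσ1 : HasSum σ 1)
    (hθent : Summable fun x => -(θ x * Real.logb 2 (θ x)))
    (hσent : Summable fun x => -(σ x * Real.logb 2 (σ x))) (k : ℕ) :
    shEnt (convMass (convPow θ k) σ) - shEnt σ ≤ k * (shEnt (convMass θ σ) - shEnt σ) := by
  obtain ⟨p, rfl⟩ := exists_pmf_toReal_eq hθ0 hθ1
  obtain ⟨q, rfl⟩ := exists_pmf_toReal_eq hσ0 hσ1
  have hq : pmfEntropy q ≠ ⊤ := pmfEntropy_ne_top hσent
  have hpq : pmfEntropy (pmfConv p q) ≠ ⊤ :=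
    ne_top_of_le_ne_top (ENNReal.add_ne_top.2 ⟨pmfEntropy_ne_top hθent, hq⟩)
      (pmfEntropy_pmfConv_le p q)
  have hbound : k * pmfEntropy (pmfConv p q) + pmfEntropy q ≠ ⊤ := by finiteness
  have key := pmfEntropy_pmfConvPow_pmfConv_add_le p q k
  obtain ⟨hkp_q, hk_q⟩ := ENNReal.add_ne_top.1 (ne_top_of_le_ne_top hbound key)
  replace key := ENNReal.toReal_mono hbound key
  rw [ENNReal.toReal_add hkp_q hk_q, ENNReal.toReal_add (ENNReal.add_ne_top.1 hbound).1 hq] at key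
  simp only [ENNReal.toReal_mul, ENNReal.toReal_natCast, toReal_pmfEntropy] at key
  rw [convPow_toReal, convMass_toReal, convMass_toReal]
  refine le_of_mul_le_mul_left ?_ (Real.log_pos one_lt_two)
  linarith

/-- The Kaimanovich–Vershik lemma: for probability measures `θ, σ` with finite Shannon
entropy on a countable abelian group, `H(θ^{*k} * σ) − H(σ) ≤ k (H(θ * σ) − H(σ))`. -/
theorem stmt2 {Γ : Type*} [AddCommGroup Γ] [Countable Γ] [DecidableEq Γ]
    (θ σ : Γ → ℝ)
    (hθ0 : ∀ x, 0 ≤ θ x) (hσ0 : ∀ x, 0 ≤ σ x)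
    (hθ1 : HasSum θ 1) (hσ1 : HasSum σ 1)
    (hθent : Summable fun x => -(θ x * Real.logb 2 (θ x)))
    (hσent : Summable fun x => -(σ x * Real.logb 2 (σ x))) :
    ∀ k : ℕ, 1 ≤ k →
      shEnt (convMass (convPow θ k) σ) - shEnt σ ≤
        (k : ℝ) * (shEnt (convMass θ σ) - shEnt σ) :=
  fun k _ => stmt2_general θ σ hθ0 hσ0 hθ1 hσ1 hθent hσent k
end

section
/- Let Φ = {φ_i}_{i∈Λ} be a diagonal affine IFS on ℝ^d whose linear parts lie in a 1-dimensional subgroup, with Lyapunov exponents χ₁ < … < χ_d for a probability vector p, and let μ be the associated self-affine measure. Let J ⊂ {1,…,d} satisfy dim π_J μ = |J|. Then for every ε > 0 there exists M(ε) such that for all m ≥ M(ε) and all n ≥ 1, (1/m)·H(μ, π_J^{−1}𝓔_{n+m} | 𝓔_n) ≥ Σ_{j∈J} χ_j − ε. -/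
open MeasureTheory Finset

/-- The cell of the level-`n` non-conformal partition `𝓔_n` of `ℝ^d`. -/
noncomputable def Ecell (d : ℕ) (χ : Fin d → ℝ) (n : ℕ) (k : Fin d → ℤ) :
    Set (Fin d → ℝ) :=
  {x | ∀ j, (k j : ℝ) / 2 ^ ⌊χ j * n⌋ ≤ x j ∧ x j < ((k j : ℝ) + 1) / 2 ^ ⌊χ j * n⌋}

/-- The cell of the partition `π_J^{-1}𝓔_n` of `ℝ^d` indexed by `k : J → ℤ`. -/
noncomputable def EcellJ (d : ℕ) (χ : Fin d → ℝ) (J : Finset (Fin d)) (n : ℕ)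
    (k : J → ℤ) : Set (Fin d → ℝ) :=
  {x | ∀ j : J, (k j : ℝ) / 2 ^ ⌊χ j * n⌋ ≤ x j ∧ x j < ((k j : ℝ) + 1) / 2 ^ ⌊χ j * n⌋}

/-- Entropy (base 2) of a measure on `ℝ^d` with respect to `𝓔_n`. -/
noncomputable def entE (d : ℕ) (χ : Fin d → ℝ) (n : ℕ) (θ : Measure (Fin d → ℝ)) : ℝ :=
  ∑' k : Fin d → ℤ,
    -((θ (Ecell d χ n k)).toReal * Real.logb 2 (θ (Ecell d χ n k)).toReal)

/-- Entropy (base 2) of a measure with respect to the join `π_J^{-1}𝓔_{n'} ∨ 𝓔_n`. -/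
noncomputable def entJoin (d : ℕ) (χ : Fin d → ℝ) (J : Finset (Fin d)) (n' n : ℕ)
    (θ : Measure (Fin d → ℝ)) : ℝ :=
  ∑' q : (J → ℤ) × (Fin d → ℤ),
    -((θ (EcellJ d χ J n' q.1 ∩ Ecell d χ n q.2)).toReal *
      Real.logb 2 (θ (EcellJ d χ J n' q.1 ∩ Ecell d χ n q.2)).toReal)

/-!
Let `X = ∑ j ∈ J, χ j`. Decompose `μ = ∑ u, w u • (φ u)_* μ` into cylinders of contraction time
`n + O(1)`. Each `φ u` contracts the `j`-th coordinate by about `2 ^ (-(χ j * n))`, so that the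
support of `(φ u)_* μ` meets only boundedly many cells of `𝓔_n`, while the preimage under `φ u` of
a cell of `π_J⁻¹𝓔_{n+m}` is a box with sides about `2 ^ (-(χ j * m))`, `j ∈ J`. Since `π_J μ` has
full dimension, there is a set `G` of almost full measure in which all these boxes have mass at
most `2 ^ (-m (X - ε))`: cover the box by cubes of side `2 ^ (-(m * D))` with `D` large.

Put `ν = ∑ u, w u • (φ u)_* (μ.restrict G) ≤ μ`. Applying `log x ≤ x` to the information function
on the part of each cell charged by `ν` bounds the conditional entropy below by the total mass of
`ν` times `m (X - ε)`, up to a constant: the number of cells of `𝓔_n` met by a cylinder.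
-/

open Filter Topology

section Hutchinson

variable {ι Ω : Type*} [Fintype ι] [MeasurableSpace Ω] {w : ι → ℝ} {φ : ι → Ω → Ω}
  {θ θ' : Measure Ω}

/-- The Hutchinson operator `θ ↦ ∑ i, w i • (φ i)_* θ` of an iterated function system `φ` with
weights `w`. Its fixed points are the stationary (self-similar, self-affine) measures of the
system. -/
noncomputable def hutchinson (w : ι → ℝ) (φ : ι → Ω → Ω) (θ : Measure Ω) : Measure Ω :=
  ∑ i, ENNReal.ofReal (w i) • θ.map (φ i)

lemma hutchinson_apply (hφ : ∀ i, Measurable (φ i)) {X : Set Ω} (hX : MeasurableSet X) :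
    hutchinson w φ θ X = ∑ i, ENNReal.ofReal (w i) * θ (φ i ⁻¹' X) := by
  simp only [hutchinson, Measure.finsetSum_apply, Measure.smul_apply, smul_eq_mul,
    Measure.map_apply (hφ _) hX]

lemma measureReal_hutchinson [IsFiniteMeasure θ] (hw : ∀ i, 0 ≤ w i) (hφ : ∀ i, Measurable (φ i))
    {X : Set Ω} (hX : MeasurableSet X) :
    (hutchinson w φ θ).real X = ∑ i, w i * θ.real (φ i ⁻¹' X) := by
  rw [measureReal_def, hutchinson_apply hφ hX, ENNReal.toReal_sum fun i _ => by finiteness]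
  simp only [ENNReal.toReal_mul, ENNReal.toReal_ofReal (hw _), measureReal_def]

lemma measureReal_hutchinson_restrict [IsFiniteMeasure θ] (hw : ∀ i, 0 ≤ w i)
    (hφ : ∀ i, Measurable (φ i)) {G X : Set Ω} (hX : MeasurableSet X) :
    (hutchinson w φ (θ.restrict G)).real X = ∑ i, w i * θ.real (φ i ⁻¹' X ∩ G) := by
  rw [measureReal_hutchinson hw hφ hX]
  simp only [measureReal_restrict_apply (hφ _ hX)]

lemma hutchinson_mono (hφ : ∀ i, Measurable (φ i)) (h : θ ≤ θ') :
    hutchinson w φ θ ≤ hutchinson w φ θ' :=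
  Measure.le_iff.2 fun X hX => by
    rw [hutchinson_apply hφ hX, hutchinson_apply hφ hX]
    gcongr

lemma hutchinson_sigma {κ : ι → Type*} [∀ i, Fintype (κ i)] {v : ∀ i, κ i → ℝ}
    {ψ : ∀ i, κ i → Ω → Ω} (hw : ∀ i, 0 ≤ w i) (hφ : ∀ i, Measurable (φ i))
    (hψ : ∀ i u, Measurable (ψ i u)) (h : ∀ i, θ = hutchinson (v i) (ψ i) θ) :
    hutchinson (fun u : Σ i, κ i => w u.1 * v u.1 u.2) (fun u => φ u.1 ∘ ψ u.1 u.2) θ =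
      hutchinson w φ θ := by
  ext X hX
  rw [hutchinson_apply (fun u : Σ i, κ i => (hφ u.1).comp (hψ u.1 u.2)) hX,
    hutchinson_apply hφ hX, Fintype.sum_sigma]
  refine Finset.sum_congr rfl fun i _ => ?_
  have hi : θ (φ i ⁻¹' X) = ∑ u, ENNReal.ofReal (v i u) * θ (ψ i u ⁻¹' (φ i ⁻¹' X)) := by
    conv_lhs => rw [h i]
    exact hutchinson_apply (hψ i) (hφ i hX)
  simp only [hi, Finset.mul_sum, ENNReal.ofReal_mul (hw i), mul_assoc, Set.preimage_comp]

end Hutchinson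

section Support

variable {E : Type*} [SeminormedAddCommGroup E] [MeasurableSpace E] [OpensMeasurableSpace E]
  {μ : Measure E} [IsFiniteMeasure μ]

lemma tendsto_measure_norm_gt_atTop (μ : Measure E) [IsFiniteMeasure μ] :
    Tendsto (fun s : ℝ => μ {x | s < ‖x‖}) atTop (𝓝 0) := by
  have hempty : ⋂ s : ℝ, {x : E | s < ‖x‖} = ∅ :=
    Set.eq_empty_of_forall_notMem fun x hx => lt_irrefl ‖x‖ (Set.mem_iInter.1 hx ‖x‖)
  rw [← measure_empty (μ := μ), ← hempty]
  exact tendsto_measure_iInter_atTop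
    (fun s => (isOpen_lt continuous_const continuous_norm).measurableSet.nullMeasurableSet)
    (fun s s' hs x hx => hs.trans_lt hx) ⟨0, measure_ne_top _ _⟩

/-- Beyond the radius `(A + 1) / (1 - c)` every map of the system decreases the norm by at least
one, so the tail of `μ` is constant along radii in arithmetic progression. -/
theorem exists_ae_norm_le_of_eq_hutchinson {ι : Type*} [Fintype ι] {w : ι → ℝ} {φ : ι → E → E}
    (hw : ∀ i, 0 ≤ w i) (hw1 : ∑ i, w i = 1) (hφ : ∀ i, Measurable (φ i))
    (hμ : μ = hutchinson w φ μ) {c A : ℝ} (hc0 : 0 ≤ c) (hc1 : c < 1) (hA : 0 ≤ A)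
    (hφA : ∀ i x, ‖φ i x‖ ≤ c * ‖x‖ + A) : ∃ R, 0 ≤ R ∧ ∀ᵐ x ∂μ, ‖x‖ ≤ R := by
  have hstep (s : ℝ) : μ {x | c * s + A < ‖x‖} ≤ μ {x | s < ‖x‖} := by
    have hsub (i : ι) : φ i ⁻¹' {x | c * s + A < ‖x‖} ⊆ {x | s < ‖x‖} := fun x hx => by
      by_contra! hxs
      exact absurd ((hφA i x).trans (by gcongr; exact not_lt.1 hxs)) (not_le.2 hx)
    calc μ {x | c * s + A < ‖x‖}
        = ∑ i, ENNReal.ofReal (w i) * μ (φ i ⁻¹' {x | c * s + A < ‖x‖}) := by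
          conv_lhs => rw [hμ]
          exact hutchinson_apply hφ (isOpen_lt continuous_const continuous_norm).measurableSet
      _ ≤ ∑ i, ENNReal.ofReal (w i) * μ {x | s < ‖x‖} := by
          gcongr with i
          exact hsub i
      _ = μ {x | s < ‖x‖} := by
          rw [← Finset.sum_mul, ← ENNReal.ofReal_sum_of_nonneg fun i _ => hw i, hw1,
            ENNReal.ofReal_one, one_mul]
  set R := (A + 1) / (1 - c)
  have hRc : (1 - c) * R = A + 1 := mul_div_cancel₀ _ (by linarith)
  have htail (k : ℕ) : μ {x | R < ‖x‖} ≤ μ {x | R + k < ‖x‖} := by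
    induction k with
    | zero => simp
    | succ k ih =>
      refine (ih.trans (measure_mono fun x hx => ?_)).trans (hstep (R + (k + 1 : ℕ)))
      have : 0 ≤ (1 - c) * (k + 1) := mul_nonneg (by linarith) (by positivity)
      refine lt_of_le_of_lt ?_ (show R + k < ‖x‖ from hx)
      push_cast
      linarith
  refine ⟨R, div_nonneg (by linarith) (by linarith), ?_⟩
  have hlim : Tendsto (fun k : ℕ => μ {x | R + k < ‖x‖}) atTop (𝓝 0) :=
    (tendsto_measure_norm_gt_atTop μ).comp
      (tendsto_atTop_add_const_left _ R tendsto_natCast_atTop_atTop)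
  simpa only [ae_iff, not_le, nonpos_iff_eq_zero] using ge_of_tendsto' hlim htail

end Support

section Entropy

variable {Ω α β : Type*} [MeasurableSpace Ω] {μ : Measure Ω}

/-- The Shannon entropy, in bits, of `μ` with respect to the partition of `Ω` into the fibres of
a labelling `f`. Conditional entropies `H(μ, P | Q)` are written as differences
`labelEntropy μ (fun x => (P x, Q x)) - labelEntropy μ Q`. -/
noncomputable def labelEntropy (μ : Measure Ω) (f : Ω → α) : ℝ :=
  ∑' a, -(μ.real (f ⁻¹' {a}) * Real.logb 2 (μ.real (f ⁻¹' {a})))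

lemma measureReal_preimage_singleton_eq_zero {f : Ω → α} {F : Finset α}
    (hF : ∀ᵐ x ∂μ, f x ∈ F) {a : α} (ha : a ∉ F) : μ.real (f ⁻¹' {a}) = 0 := by
  have hnull : μ (f ⁻¹' {a}) = 0 :=
    measure_mono_null (fun x (hx : f x = a) (hxF : f x ∈ F) => ha (hx ▸ hxF)) hF
  rw [measureReal_def, hnull, ENNReal.toReal_zero]

lemma labelEntropy_eq_sum {f : Ω → α} {F : Finset α} (hF : ∀ᵐ x ∂μ, f x ∈ F) :
    labelEntropy μ f = ∑ a ∈ F, -(μ.real (f ⁻¹' {a}) * Real.logb 2 (μ.real (f ⁻¹' {a}))) :=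
  tsum_eq_sum fun a ha => by rw [measureReal_preimage_singleton_eq_zero hF ha, zero_mul, neg_zero]

lemma sum_measureReal_preimage_singleton_inter [MeasurableSpace α] [MeasurableSingletonClass α]
    [IsFiniteMeasure μ] {f : Ω → α} (hf : Measurable f) {F : Finset α} (hF : ∀ᵐ x ∂μ, f x ∈ F)
    (X : Set Ω) : ∑ a ∈ F, μ.real (f ⁻¹' {a} ∩ X) = μ.real X := by
  have hfib (a : α) : MeasurableSet (f ⁻¹' {a}) := hf (measurableSet_singleton a)
  have hFX : (f ⁻¹' F ∩ X : Set Ω) =ᵐ[μ] X :=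
    inter_ae_eq_right_of_ae_eq_univ (eventuallyEq_univ.2 hF)
  simp_rw [← measureReal_restrict_apply (hfib _)]
  rw [sum_measureReal_preimage_singleton F fun a _ => hfib a,
    measureReal_restrict_apply (hf F.measurableSet), measureReal_congr hFX]

variable {P : Ω → α} {Q : Ω → β} {F : Finset α} {F' : Finset β}

lemma labelEntropy_prod_sub_labelEntropy [MeasurableSpace α] [MeasurableSingletonClass α]
    [IsFiniteMeasure μ] (hP : Measurable P) (hPF : ∀ᵐ x ∂μ, P x ∈ F) (hQF : ∀ᵐ x ∂μ, Q x ∈ F') :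
    labelEntropy μ (fun x => (P x, Q x)) - labelEntropy μ Q =
      ∑ k ∈ F', ∑ q ∈ F, μ.real (P ⁻¹' {q} ∩ Q ⁻¹' {k}) *
        (Real.logb 2 (μ.real (Q ⁻¹' {k})) - Real.logb 2 (μ.real (P ⁻¹' {q} ∩ Q ⁻¹' {k}))) := by
  have hfib (q : α) (k : β) : (fun x => (P x, Q x)) ⁻¹' {(q, k)} = P ⁻¹' {q} ∩ Q ⁻¹' {k} := by
    ext x
    simp
  have hPQF : ∀ᵐ x ∂μ, (P x, Q x) ∈ F ×ˢ F' := by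
    filter_upwards [hPF, hQF] with x hx hx' using mem_product.2 ⟨hx, hx'⟩
  rw [labelEntropy_eq_sum hPQF, labelEntropy_eq_sum hQF, sum_product_right,
    ← Finset.sum_sub_distrib]
  refine Finset.sum_congr rfl fun k _ => ?_
  simp only [hfib, mul_sub, Finset.sum_sub_distrib, Finset.sum_neg_distrib, ← Finset.sum_mul,
    sum_measureReal_preimage_singleton_inter hP hPF]
  ring

/-- The tangent inequality `log x ≤ x` at `x = 2 ^ L * a / b`. -/
lemma mul_sub_le_mul_logb_sub_logb {a b g W L : ℝ} (hg : 0 ≤ g) (hga : g ≤ a) (hab : a ≤ b)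
    (hgW : g ≤ 2 ^ (-L) * W) :
    L * g - W * (a / b) / Real.log 2 ≤ a * (Real.logb 2 b - Real.logb 2 a) := by
  rcases (hg.trans hga).eq_or_lt with rfl | ha
  · simp [le_antisymm hga hg]
  have hb : 0 < b := ha.trans_le hab
  set x := 2 ^ L * (a / b) with hx
  have hx0 : 0 < x := by positivity
  have hlogx : Real.logb 2 x = L + Real.logb 2 a - Real.logb 2 b := by
    rw [hx, Real.logb_mul (by positivity) (by positivity), Real.logb_div ha.ne' hb.ne',
      Real.logb_rpow two_pos (by norm_num)]
    ring
  have hgx : g * x ≤ W * (a / b) := by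
    calc g * x ≤ 2 ^ (-L) * W * x := by gcongr
      _ = W * (a / b) := by
        rw [hx, Real.rpow_neg two_pos.le]
        field_simp
  calc L * g - W * (a / b) / Real.log 2
      ≤ L * g - g * x / Real.log 2 := by gcongr
    _ ≤ L * g - g * Real.logb 2 x := by
        rw [mul_div_assoc, Real.logb]
        gcongr
        exact Real.log_le_self hx0.le
    _ = g * (Real.logb 2 b - Real.logb 2 a) := by rw [hlogx]; ring
    _ ≤ a * (Real.logb 2 b - Real.logb 2 a) := by
        gcongr
        exact sub_nonneg.2 (Real.logb_le_logb_of_le one_lt_two ha hab)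

lemma sum_sum_mul_ite_mem_le [DecidableEq β] {κ : Type*} [Fintype κ] {w : κ → ℝ}
    (hw : ∀ u, 0 ≤ w u) (hw1 : ∑ u, w u = 1) {N : κ → Finset β} {C : ℝ}
    (hNC : ∀ u, (#(N u) : ℝ) ≤ C) (F' : Finset β) :
    ∑ k ∈ F', ∑ u, w u * (if k ∈ N u then 1 else 0) ≤ C := by
  calc ∑ k ∈ F', ∑ u, w u * (if k ∈ N u then 1 else 0)
      = ∑ u, w u * #(F' ∩ N u) := by
        rw [Finset.sum_comm]
        simp only [← Finset.mul_sum, Finset.sum_boole, Finset.filter_mem_eq_inter]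
    _ ≤ ∑ u, w u * C := by
        gcongr with u
        · exact hw u
        · exact le_trans (by gcongr; exact Finset.inter_subset_right) (hNC u)
    _ = C := by rw [← Finset.sum_mul, hw1, one_mul]

variable [IsFiniteMeasure μ] [MeasurableSpace α] [MeasurableSingletonClass α] [MeasurableSpace β]
  [MeasurableSingletonClass β] {L : ℝ}

theorem mul_measureReal_univ_sub_le_labelEntropy_sub (hP : Measurable P) (hQ : Measurable Q)
    (hPF : ∀ᵐ x ∂μ, P x ∈ F) (hQF : ∀ᵐ x ∂μ, Q x ∈ F') {ν : Measure Ω} (hνμ : ν ≤ μ) {W : β → ℝ}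
    (hW : ∀ k, 0 ≤ W k) (hνW : ∀ q k, ν.real (P ⁻¹' {q} ∩ Q ⁻¹' {k}) ≤ 2 ^ (-L) * W k) :
    L * ν.real Set.univ - (∑ k ∈ F', W k) / Real.log 2 ≤
      labelEntropy μ (fun x => (P x, Q x)) - labelEntropy μ Q := by
  have : IsFiniteMeasure ν := isFiniteMeasure_of_le μ hνμ
  set a : α → β → ℝ := fun q k => μ.real (P ⁻¹' {q} ∩ Q ⁻¹' {k})
  set b : β → ℝ := fun k => μ.real (Q ⁻¹' {k})
  set g : α → β → ℝ := fun q k => ν.real (P ⁻¹' {q} ∩ Q ⁻¹' {k}) with hg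
  have hab (k : β) : ∑ q ∈ F, a q k = b k := sum_measureReal_preimage_singleton_inter hP hPF _
  have hνF : ∀ᵐ x ∂ν, P x ∈ F := ae_mono hνμ hPF
  have hνF' : ∀ᵐ x ∂ν, Q x ∈ F' := ae_mono hνμ hQF
  have hg_sum : ∑ k ∈ F', ∑ q ∈ F, g q k = ν.real Set.univ := by
    simp only [hg, sum_measureReal_preimage_singleton_inter hP hνF]
    simpa only [Set.inter_univ] using sum_measureReal_preimage_singleton_inter hQ hνF' Set.univ
  have hW_sum : ∑ k ∈ F', ∑ q ∈ F, W k * (a q k / b k) / Real.log 2 ≤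
      (∑ k ∈ F', W k) / Real.log 2 := by
    rw [Finset.sum_div]
    gcongr with k
    rw [← Finset.sum_div, ← Finset.mul_sum, ← Finset.sum_div, hab]
    gcongr
    exact mul_le_of_le_one_right (hW k) (div_self_le_one _)
  calc L * ν.real Set.univ - (∑ k ∈ F', W k) / Real.log 2
      ≤ ∑ k ∈ F', ∑ q ∈ F, (L * g q k - W k * (a q k / b k) / Real.log 2) := by
        simp only [Finset.sum_sub_distrib, ← Finset.mul_sum, hg_sum]
        gcongr
    _ ≤ ∑ k ∈ F', ∑ q ∈ F, a q k * (Real.logb 2 (b k) - Real.logb 2 (a q k)) := by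
        gcongr with k _ q _
        exact mul_sub_le_mul_logb_sub_logb measureReal_nonneg
          (ENNReal.toReal_mono (measure_ne_top _ _) (hνμ _))
          (measureReal_mono Set.inter_subset_right) (hνW q k)
    _ = _ := (labelEntropy_prod_sub_labelEntropy hP hPF hQF).symm

/-- The submeasure to compare with is the Hutchinson operator applied to `μ.restrict G`. -/
theorem mul_measureReal_sub_le_labelEntropy_sub_of_eq_hutchinson (hP : Measurable P)
    (hQ : Measurable Q) (hPF : ∀ᵐ x ∂μ, P x ∈ F) (hQF : ∀ᵐ x ∂μ, Q x ∈ F') {κ : Type*}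
    [Fintype κ] {w : κ → ℝ} {φ : κ → Ω → Ω} (hw : ∀ u, 0 ≤ w u) (hw1 : ∑ u, w u = 1)
    (hφ : ∀ u, Measurable (φ u)) (hμ : μ = hutchinson w φ μ) {G : Set Ω}
    (hPG : ∀ u q, μ.real (φ u ⁻¹' (P ⁻¹' {q}) ∩ G) ≤ 2 ^ (-L)) {N : κ → Finset β} {C : ℝ}
    (hQN : ∀ u, ∀ᵐ x ∂μ, Q (φ u x) ∈ N u) (hNC : ∀ u, (#(N u) : ℝ) ≤ C) :
    L * μ.real G - C / Real.log 2 ≤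
      labelEntropy μ (fun x => (P x, Q x)) - labelEntropy μ Q := by
  classical
  set ν := hutchinson w φ (μ.restrict G)
  set W : β → ℝ := fun k => ∑ u, w u * if k ∈ N u then 1 else 0
  have hνμ : ν ≤ μ := (hutchinson_mono hφ Measure.restrict_le_self).trans hμ.ge
  have hν_univ : ν.real Set.univ = μ.real G := by
    simp only [ν, measureReal_hutchinson_restrict hw hφ .univ, Set.preimage_univ, Set.univ_inter,
      ← Finset.sum_mul, hw1, one_mul]
  have hW0 (k : β) : 0 ≤ W k :=
    Finset.sum_nonneg fun u _ => mul_nonneg (hw u) (by split_ifs <;> norm_num)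
  have hνW (q : α) (k : β) : ν.real (P ⁻¹' {q} ∩ Q ⁻¹' {k}) ≤ 2 ^ (-L) * W k := by
    rw [measureReal_hutchinson_restrict hw hφ
      ((hP (measurableSet_singleton q)).inter (hQ (measurableSet_singleton k))), Finset.mul_sum]
    refine Finset.sum_le_sum fun u _ => ?_
    rw [mul_left_comm]
    refine mul_le_mul_of_nonneg_left ?_ (hw u)
    split_ifs with hk
    · rw [mul_one]
      refine (measureReal_mono ?_).trans (hPG u q)
      exact Set.inter_subset_inter_left _ (Set.preimage_mono Set.inter_subset_left)
    · have hQ0 : μ.real (φ u ⁻¹' (Q ⁻¹' {k})) = 0 :=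
        measureReal_preimage_singleton_eq_zero (f := Q ∘ φ u) (hQN u) hk
      rw [mul_zero, ← hQ0]
      exact measureReal_mono (Set.inter_subset_left.trans
        (Set.preimage_mono Set.inter_subset_right))
  calc L * μ.real G - C / Real.log 2
      ≤ L * ν.real Set.univ - (∑ k ∈ F', W k) / Real.log 2 := by
        rw [hν_univ]
        gcongr
        exact sum_sum_mul_ite_mem_le hw hw1 hNC F'
    _ ≤ _ := mul_measureReal_univ_sub_le_labelEntropy_sub hP hQ hPF hQF hνμ hW0 hνW

end Entropy

section Uniformization

variable {Ω ι : Type*} [MeasurableSpace Ω] {μ : Measure Ω}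

/-- The sets on which `p` holds throughout the members of an antitone basis of `l` increase to a
set of full measure. -/
theorem exists_lt_measureReal_forall_eventually [IsFiniteMeasure μ] {l : Filter ι}
    [l.IsCountablyGenerated] {p : ι → Ω → Prop} (h : ∀ᵐ x ∂μ, ∀ᶠ i in l, p i x) {η : ℝ}
    (hη : 0 < η) :
    ∃ G : Set Ω, μ.real Set.univ - η < μ.real G ∧ ∀ᶠ i in l, ∀ x ∈ G, p i x := by
  obtain ⟨s, hs⟩ := l.exists_antitone_basis
  set G : ℕ → Set Ω := fun n => {x | ∀ i ∈ s n, p i x}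
  have hG_mono : Monotone G := fun m n hmn x hx i hi => hx i (hs.antitone hmn hi)
  have hG_union : (⋃ n, G n : Set Ω) =ᵐ[μ] Set.univ := by
    refine eventuallyEq_univ.2 ?_
    filter_upwards [h] with x hx
    obtain ⟨n, -, hn⟩ := hs.1.eventually_iff.1 hx
    exact Set.mem_iUnion.2 ⟨n, fun i hi => hn hi⟩
  have hlim : Tendsto (fun n => μ.real (G n)) atTop (𝓝 (μ.real Set.univ)) := by
    rw [← measureReal_congr hG_union]
    exact (ENNReal.tendsto_toReal (measure_ne_top _ _)).comp
      (tendsto_measure_iUnion_atTop hG_mono)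
  obtain ⟨n, hn⟩ := (hlim.eventually (lt_mem_nhds (sub_lt_self _ hη))).exists
  exact ⟨G n, hn, hs.1.eventually_iff.2 ⟨n, trivial, fun i hi x hx => hx i hi⟩⟩

lemma eventually_le_rpow_of_tendsto_log_div_log {m : ℝ → ℝ} (hm : ∀ δ, 0 ≤ m δ) {s κ : ℝ}
    (h : Tendsto (fun δ => Real.log (m δ) / Real.log δ) (𝓝[>] 0) (𝓝 s)) (hκ : κ < s) :
    ∀ᶠ δ in 𝓝[>] 0, m δ ≤ δ ^ κ := by
  filter_upwards [h.eventually (lt_mem_nhds hκ), Ioo_mem_nhdsGT zero_lt_one] with δ hδ ⟨h0, h1⟩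
  rcases (hm δ).eq_or_lt with hz | hpos
  · exact hz ▸ Real.rpow_nonneg h0.le κ
  · rw [Real.le_rpow_iff_log_le hpos h0]
    exact ((lt_div_iff_of_neg (Real.log_neg h0 h1)).1 hδ).le

theorem exists_lt_measureReal_forall_eventually_closedBall_le {E : Type*} [PseudoMetricSpace E]
    [MeasurableSpace E] [OpensMeasurableSpace E] [IsFiniteMeasure μ] {f : Ω → E}
    (hf : Measurable f) {s : ℝ}
    (h : ∀ᵐ y ∂μ.map f, Tendsto
      (fun δ => Real.log ((μ.map f).real (Metric.closedBall y δ)) / Real.log δ) (𝓝[>] 0) (𝓝 s))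
    {κ η : ℝ} (hκ : κ < s) (hη : 0 < η) :
    ∃ G : Set Ω, μ.real Set.univ - η < μ.real G ∧
      ∀ᶠ δ in 𝓝[>] 0, ∀ x ∈ G, μ.real (f ⁻¹' Metric.closedBall (f x) δ) ≤ δ ^ κ := by
  refine exists_lt_measureReal_forall_eventually ?_ hη
  filter_upwards [ae_of_ae_map hf.aemeasurable h] with x hx
  simp only [← map_measureReal_apply hf Metric.isClosed_closedBall.measurableSet]
  exact eventually_le_rpow_of_tendsto_log_div_log (fun _ => measureReal_nonneg) hx hκ

end Uniformization

section Covering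

variable {ι : Type*} [Fintype ι]

lemma card_Icc_floor_le [DecidableEq ι] {u v : ι → ℝ} (h : u ≤ v) :
    (#(Icc (fun j => ⌊u j⌋) (fun j => ⌊v j⌋)) : ℝ) ≤ ∏ j, (v j - u j + 2) := by
  rw [Pi.card_Icc, Nat.cast_prod]
  refine Finset.prod_le_prod (fun j _ => Nat.cast_nonneg _) fun j _ => ?_
  have hfloor : ⌊u j⌋ ≤ ⌊v j⌋ + 1 := (Int.floor_mono (h j)).trans (lt_add_one _).le
  rw [Int.card_Icc, ← Int.cast_natCast, Int.toNat_of_nonneg (by linarith)]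
  push_cast
  linarith [Int.floor_le (v j), Int.lt_floor_add_one (u j)]

lemma dist_le_of_floor_div_eq {x y : ι → ℝ} {δ : ℝ} (hδ : 0 < δ)
    (h : ∀ j, ⌊x j / δ⌋ = ⌊y j / δ⌋) : dist x y ≤ δ :=
  (dist_pi_le_iff hδ.le).2 fun j => by
    have hj := Int.abs_sub_lt_one_of_floor_eq_floor (h j)
    rw [← sub_div, abs_div, abs_of_pos hδ, div_lt_one hδ] at hj
    exact hj.le

variable {Ω : Type*} [MeasurableSpace Ω] {μ : Measure Ω} [IsFiniteMeasure μ] {β : ℝ}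

lemma measureReal_le_card_mul {α : Type*} {label : Ω → α} {N : Finset α} {X : Set Ω}
    (hN : ∀ x ∈ X, label x ∈ N) (hβ : ∀ k, μ.real (label ⁻¹' {k} ∩ X) ≤ β) :
    μ.real X ≤ #N * β := by
  calc μ.real X ≤ μ.real (⋃ k ∈ N, label ⁻¹' {k} ∩ X) :=
        measureReal_mono (fun x hx => Set.mem_biUnion (hN x hx) ⟨rfl, hx⟩) (measure_ne_top _ _)
    _ ≤ ∑ k ∈ N, μ.real (label ⁻¹' {k} ∩ X) := measureReal_biUnion_finset_le _ _
    _ ≤ ∑ _k ∈ N, β := Finset.sum_le_sum fun k _ => hβ k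
    _ = #N * β := by rw [Finset.sum_const, nsmul_eq_mul]

theorem measureReal_inter_le_of_abs_sub_le {f : Ω → ι → ℝ} {A G : Set Ω} {S : ι → ℝ}
    {δ : ℝ} (hδ : 0 < δ) (hβ : 0 ≤ β)
    (hG : ∀ x ∈ G, μ.real (f ⁻¹' Metric.closedBall (f x) δ) ≤ β)
    (hS : ∀ j, 0 ≤ S j) (hA : ∀ x ∈ A, ∀ y ∈ A, ∀ j, |f x j - f y j| ≤ S j) :
    μ.real (A ∩ G) ≤ (∏ j, (2 * S j / δ + 2)) * β := by
  classical
  obtain hempty | ⟨x₀, hx₀⟩ := (A ∩ G).eq_empty_or_nonempty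
  · rw [hempty, measureReal_empty]
    exact mul_nonneg (Finset.prod_nonneg fun j _ => by have := hS j; positivity) hβ
  set u : ι → ℝ := fun j => (f x₀ j - S j) / δ
  set v : ι → ℝ := fun j => (f x₀ j + S j) / δ
  have huv : u ≤ v := fun j => by
    have := hS j
    dsimp only [u, v]
    gcongr
    linarith
  set N := Icc (fun j => ⌊u j⌋) (fun j => ⌊v j⌋)
  set label : Ω → ι → ℤ := fun x j => ⌊f x j / δ⌋
  have hlabel {x : Ω} (hx : x ∈ A) : label x ∈ N := by
    refine mem_Icc.2 ⟨fun j => Int.floor_mono ?_, fun j => Int.floor_mono ?_⟩ <;>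
      · dsimp only [u, v]
        gcongr
        linarith [abs_le.1 (hA x hx x₀ hx₀.1 j)]
  have hfiber (k : ι → ℤ) : μ.real (label ⁻¹' {k} ∩ (A ∩ G)) ≤ β := by
    obtain he | ⟨x, hx⟩ := (label ⁻¹' {k} ∩ (A ∩ G)).eq_empty_or_nonempty
    · rwa [he, measureReal_empty]
    refine (measureReal_mono fun y hy => ?_).trans (hG x hx.2.2)
    exact Metric.mem_closedBall.2 (dist_le_of_floor_div_eq hδ fun j =>
      congrFun ((show label y = k from hy.1).trans (show label x = k from hx.1).symm) j)
  calc μ.real (A ∩ G) ≤ #N * β := measureReal_le_card_mul (fun x hx => hlabel hx.1) hfiber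
    _ ≤ (∏ j, (v j - u j + 2)) * β := by gcongr; exact card_Icc_floor_le huv
    _ = (∏ j, (2 * S j / δ + 2)) * β := by
        congr! 2 with j
        dsimp only [u, v]
        ring

end Covering

section CellIndex

variable {ι : Type*} {χ : ι → ℝ} {n : ℕ} {x y : ι → ℝ}

/-- The index of the cell of the level-`n` non-conformal partition `𝓔_n` that contains `x`, for an
arbitrary index set of coordinates; `J.restrict (cellIndex χ n x)` is the index of the cell of
`π_J⁻¹𝓔_n`. -/
noncomputable def cellIndex (χ : ι → ℝ) (n : ℕ) (x : ι → ℝ) : ι → ℤ :=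
  fun j => ⌊x j * 2 ^ ⌊χ j * n⌋⌋

lemma measurable_cellIndex : Measurable (cellIndex χ n) :=
  measurable_pi_iff.2 fun j => ((measurable_pi_apply j).mul_const _).floor

lemma cellIndex_eq_iff {j : ι} {k : ℤ} :
    cellIndex χ n x j = k ↔
      (k : ℝ) / 2 ^ ⌊χ j * n⌋ ≤ x j ∧ x j < ((k : ℝ) + 1) / 2 ^ ⌊χ j * n⌋ := by
  have h2 : (0 : ℝ) < 2 ^ ⌊χ j * n⌋ := by positivity
  rw [cellIndex, Int.floor_eq_iff, div_le_iff₀ h2, lt_div_iff₀ h2]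

lemma abs_sub_le_of_cellIndex_eq {j : ι} (h : cellIndex χ n x j = cellIndex χ n y j) :
    |x j - y j| ≤ 2 ^ (1 - χ j * n) := by
  have hlt := Int.abs_sub_lt_one_of_floor_eq_floor h
  rw [← sub_mul, abs_mul, abs_of_pos (by positivity : (0 : ℝ) < 2 ^ ⌊χ j * n⌋),
    ← lt_div_iff₀ (by positivity), one_div, ← zpow_neg, ← Real.rpow_intCast] at hlt
  refine hlt.le.trans (Real.rpow_le_rpow_of_exponent_le one_le_two ?_)
  push_cast
  linarith [Int.lt_floor_add_one (χ j * n)]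

variable [Fintype ι]

lemma exists_card_le_forall_cellIndex_mem {s : ι → ℝ} (hs : ∀ j, 0 ≤ s j) (c : ι → ℝ) :
    ∃ N : Finset (ι → ℤ), (#N : ℝ) ≤ ∏ j, (2 * s j + 2) ∧
      ∀ x, (∀ j, |x j - c j| ≤ s j * 2 ^ (-(χ j * n))) → cellIndex χ n x ∈ N := by
  classical
  set u : ι → ℝ := fun j => c j * 2 ^ ⌊χ j * n⌋ - s j
  set v : ι → ℝ := fun j => c j * 2 ^ ⌊χ j * n⌋ + s j
  have huv : u ≤ v := fun j => by
    dsimp only [u, v]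
    linarith [hs j]
  refine ⟨Icc (fun j => ⌊u j⌋) (fun j => ⌊v j⌋), (card_Icc_floor_le huv).trans_eq ?_,
    fun x hx => ?_⟩
  · congr! 1 with j
    dsimp only [u, v]
    ring
  have hdist (j : ι) : |x j * 2 ^ ⌊χ j * n⌋ - c j * 2 ^ ⌊χ j * n⌋| ≤ s j := by
    calc |x j * 2 ^ ⌊χ j * n⌋ - c j * 2 ^ ⌊χ j * n⌋|
        = |x j - c j| * 2 ^ ⌊χ j * n⌋ := by
          rw [← sub_mul, abs_mul, abs_of_pos (by positivity : (0 : ℝ) < 2 ^ ⌊χ j * n⌋)]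
      _ ≤ s j * 2 ^ (-(χ j * n)) * 2 ^ (χ j * n) := by
          have hsj := hs j
          gcongr
          · exact hx j
          · rw [← Real.rpow_intCast]
            exact Real.rpow_le_rpow_of_exponent_le one_le_two (Int.floor_le _)
      _ = s j := by
          rw [mul_assoc, ← Real.rpow_add two_pos, neg_add_cancel, Real.rpow_zero, mul_one]
  exact mem_Icc.2
    ⟨fun j => Int.floor_mono (by dsimp only [u]; linarith [abs_le.1 (hdist j)]),
      fun j => Int.floor_mono (by dsimp only [v]; linarith [abs_le.1 (hdist j)])⟩

lemma exists_forall_cellIndex_mem_of_norm_le (χ : ι → ℝ) (n : ℕ) {R : ℝ} (hR : 0 ≤ R) :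
    ∃ N : Finset (ι → ℤ), ∀ x, ‖x‖ ≤ R → cellIndex χ n x ∈ N := by
  obtain ⟨N, -, hN⟩ := exists_card_le_forall_cellIndex_mem (χ := χ) (n := n)
    (s := fun j => R * 2 ^ (χ j * n)) (fun j => by positivity) 0
  refine ⟨N, fun x hx => hN x fun j => ?_⟩
  rw [mul_assoc, ← Real.rpow_add two_pos, add_neg_cancel, Real.rpow_zero, mul_one, Pi.zero_apply,
    sub_zero]
  exact (norm_le_pi_norm x j).trans hx

lemma exists_card_le_forall_cellIndex_mul_add_mem {ρ : ι → ℝ} {R : ℝ}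
    (hρ : ∀ j, |ρ j| ≤ 2 ^ (-(χ j * n))) (hR : 0 ≤ R) (b : ι → ℝ) :
    ∃ N : Finset (ι → ℤ), (#N : ℝ) ≤ (2 * R + 2) ^ Fintype.card ι ∧
      ∀ x, ‖x‖ ≤ R → cellIndex χ n (ρ * x + b) ∈ N := by
  obtain ⟨N, hcard, hN⟩ := exists_card_le_forall_cellIndex_mem (χ := χ) (n := n)
    (s := fun _ => R) (fun _ => hR) b
  refine ⟨N, hcard.trans_eq (by simp only [prod_const, card_univ]), fun x hx => hN _ fun j => ?_⟩
  rw [Pi.add_apply, Pi.mul_apply, add_sub_cancel_right, abs_mul, mul_comm R]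
  exact mul_le_mul (hρ j) ((norm_le_pi_norm x j).trans hx) (abs_nonneg _) (by positivity)

end CellIndex

section NonconformalEntropy

variable {d : ℕ} {χ : Fin d → ℝ}

lemma preimage_cellIndex_singleton (n : ℕ) (k : Fin d → ℤ) :
    cellIndex χ n ⁻¹' {k} = Ecell d χ n k := by
  ext x
  simp only [Set.mem_preimage, Set.mem_singleton_iff, funext_iff, cellIndex_eq_iff, Ecell,
    Set.mem_ofPred_eq]

lemma preimage_restrict_cellIndex_singleton (J : Finset (Fin d)) (n : ℕ) (k : J → ℤ) :
    (fun x => J.restrict (cellIndex χ n x)) ⁻¹' {k} = EcellJ d χ J n k := by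
  ext x
  simp only [Set.mem_preimage, Set.mem_singleton_iff, funext_iff, Finset.restrict,
    cellIndex_eq_iff, EcellJ, Set.mem_ofPred_eq]

lemma entE_eq_labelEntropy (n : ℕ) (θ : Measure (Fin d → ℝ)) :
    entE d χ n θ = labelEntropy θ (cellIndex χ n) := by
  simp only [entE, labelEntropy, preimage_cellIndex_singleton, measureReal_def]

lemma entJoin_eq_labelEntropy (J : Finset (Fin d)) (n' n : ℕ) (θ : Measure (Fin d → ℝ)) :
    entJoin d χ J n' n θ =
      labelEntropy θ (fun x => (J.restrict (cellIndex χ n' x), cellIndex χ n x)) := by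
  have hfib (q : (J → ℤ) × (Fin d → ℤ)) :
      (fun x => (J.restrict (cellIndex χ n' x), cellIndex χ n x)) ⁻¹' {q} =
        EcellJ d χ J n' q.1 ∩ Ecell d χ n q.2 := by
    rw [← preimage_cellIndex_singleton, ← preimage_restrict_cellIndex_singleton]
    ext x
    simp only [Set.mem_preimage, Set.mem_singleton_iff, Prod.ext_iff, Set.mem_inter_iff]
  simp only [entJoin, labelEntropy, hfib, measureReal_def]

end NonconformalEntropy

section CylinderDecomposition

universe u v

variable {κ : Type v}

/-- A decomposition `μ = ∑ i, w i • (φ i)_* μ` of a measure on `κ → ℝ` into images under diagonal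
affine maps `φ i x = ρ i * x + b i` with linear parts `|ρ i j| = 2 ^ (-(τ i * χ j))`, where all
times `τ i` lie in `[s, s + T]`. For a self-affine measure these are the cylinder measures of the
words that first reach time `s`. -/
structure CylinderDecomposition (χ : κ → ℝ) (μ : Measure (κ → ℝ)) (s T : ℝ) where
  ι : Type u
  [fintype : Fintype ι]
  w : ι → ℝ
  τ : ι → ℝ
  ρ : ι → κ → ℝ
  b : ι → κ → ℝ
  w_nonneg : ∀ i, 0 ≤ w i
  sum_w : ∑ i, w i = 1
  le_τ : ∀ i, s ≤ τ i
  τ_le : ∀ i, τ i ≤ s + T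
  abs_ρ : ∀ i j, |ρ i j| = 2 ^ (-(τ i * χ j))
  eq_hutchinson : μ = hutchinson w (fun i x => ρ i * x + b i) μ

attribute [instance] CylinderDecomposition.fintype

lemma measurable_mul_add (ρ b : κ → ℝ) : Measurable fun x : κ → ℝ => ρ * x + b := by
  fun_prop

namespace CylinderDecomposition

variable {χ : κ → ℝ} {μ : Measure (κ → ℝ)} {s T : ℝ}

/-- The decomposition of `μ` into the single piece `μ`, at times `s ∈ [-T, 0]`. -/
def trivial (hs : s ≤ 0) (hsT : -T ≤ s) : CylinderDecomposition.{u} χ μ s T where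
  ι := PUnit
  w := 1
  τ := 0
  ρ := 1
  b := 0
  w_nonneg _ := zero_le_one
  sum_w := by simp
  le_τ _ := hs
  τ_le _ := by simpa using neg_le_iff_add_nonneg.1 hsT
  abs_ρ := by simp
  eq_hutchinson := by simp [hutchinson]

variable {Λ : Type u} [Fintype Λ] {p t : Λ → ℝ} {r a : Λ → κ → ℝ}

/-- Refine the first-level decomposition of `μ` by decomposing each of its pieces. -/
def bind (hp0 : ∀ i, 0 ≤ p i) (hp1 : ∑ i, p i = 1) (hr : ∀ i j, |r i j| = 2 ^ (-(t i * χ j)))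
    (hμ : μ = hutchinson p (fun i x => r i * x + a i) μ)
    (D : ∀ i, CylinderDecomposition.{u} χ μ (s - t i) T) : CylinderDecomposition.{u} χ μ s T where
  ι := Σ i, (D i).ι
  w u := p u.1 * (D u.1).w u.2
  τ u := t u.1 + (D u.1).τ u.2
  ρ u := r u.1 * (D u.1).ρ u.2
  b u := r u.1 * (D u.1).b u.2 + a u.1
  w_nonneg u := mul_nonneg (hp0 _) ((D _).w_nonneg _)
  sum_w := by simp only [Fintype.sum_sigma, ← Finset.mul_sum, sum_w, mul_one, hp1]
  le_τ u := by linarith [(D u.1).le_τ u.2]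
  τ_le u := by linarith [(D u.1).τ_le u.2]
  abs_ρ u j := by
    rw [Pi.mul_apply, abs_mul, hr, abs_ρ, ← Real.rpow_add two_pos]
    congr 1
    ring
  eq_hutchinson := by
    have hcomp := hutchinson_sigma hp0 (fun i => measurable_mul_add (r i) (a i))
      (fun i u => measurable_mul_add ((D i).ρ u) ((D i).b u)) fun i => (D i).eq_hutchinson
    rw [← hμ] at hcomp
    refine hcomp.symm.trans ?_
    congr! 2 with u
    funext x
    simp only [Function.comp_apply]
    ring

theorem nonempty_of_le (hp0 : ∀ i, 0 ≤ p i) (hp1 : ∑ i, p i = 1)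
    (hr : ∀ i j, |r i j| = 2 ^ (-(t i * χ j)))
    (hμ : μ = hutchinson p (fun i x => r i * x + a i) μ) {t₀ : ℝ} (ht₀ : 0 < t₀)
    (ht : ∀ i, t₀ ≤ t i) (htT : ∀ i, t i ≤ T) (hs : -T ≤ s) :
    Nonempty (CylinderDecomposition.{u} χ μ s T) := by
  obtain ⟨N, hN⟩ := exists_nat_ge (s / t₀)
  rw [div_le_iff₀ ht₀] at hN
  induction N generalizing s with
  | zero => exact ⟨trivial (by simpa using hN) hs⟩
  | succ N ih =>
    rcases le_or_gt s 0 with hs0 | hs0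
    · exact ⟨trivial hs0 hs⟩
    push_cast at hN
    have hD (i : Λ) : Nonempty (CylinderDecomposition.{u} χ μ (s - t i) T) :=
      ih (by linarith [htT i]) (by linarith [ht i])
    exact ⟨bind hp0 hp1 hr hμ fun i => (hD i).some⟩

end CylinderDecomposition

theorem exists_ae_norm_le_of_eq_hutchinson_mul_add [Fintype κ] {Λ : Type*} [Fintype Λ]
    {p : Λ → ℝ} {r a : Λ → κ → ℝ} {μ : Measure (κ → ℝ)} [IsFiniteMeasure μ] (hp0 : ∀ i, 0 ≤ p i)
    (hp1 : ∑ i, p i = 1) (hr : ∀ i j, |r i j| < 1)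
    (hμ : μ = hutchinson p (fun i x => r i * x + a i) μ) :
    ∃ R, 0 ≤ R ∧ ∀ᵐ x ∂μ, ‖x‖ ≤ R := by
  have hr1 : ‖r‖ < 1 :=
    (pi_norm_lt_iff one_pos).2 fun i => (pi_norm_lt_iff one_pos).2 fun j => hr i j
  refine exists_ae_norm_le_of_eq_hutchinson hp0 hp1 (fun i => measurable_mul_add (r i) (a i)) hμ
    (norm_nonneg r) hr1 (norm_nonneg a) fun i x => ?_
  calc ‖r i * x + a i‖ ≤ ‖r i‖ * ‖x‖ + ‖a i‖ := norm_add_le_of_le (norm_mul_le _ _) le_rfl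
    _ ≤ ‖r‖ * ‖x‖ + ‖a‖ := by
        gcongr
        · exact norm_le_pi_norm r i
        · exact norm_le_pi_norm a i

end CylinderDecomposition

section CellMass

variable {κ : Type*} {χ : κ → ℝ}

lemma abs_sub_le_of_cellIndex_mul_add_eq {ρ b x y : κ → ℝ} {j : κ} {n m : ℕ} {τ T : ℝ}
    (hχ : 0 ≤ χ j) (hρ : |ρ j| = 2 ^ (-(τ * χ j))) (hτ : τ ≤ n + T)
    (h : cellIndex χ (n + m) (ρ * x + b) j = cellIndex χ (n + m) (ρ * y + b) j) :
    |x j - y j| ≤ 2 ^ (1 + T * χ j - m * χ j) := by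
  have hcell := abs_sub_le_of_cellIndex_eq h
  simp only [Pi.add_apply, Pi.mul_apply, add_sub_add_right_eq_sub, ← mul_sub, abs_mul, hρ] at hcell
  calc |x j - y j| = 2 ^ (τ * χ j) * (2 ^ (-(τ * χ j)) * |x j - y j|) := by
        rw [← mul_assoc, ← Real.rpow_add two_pos, add_neg_cancel, Real.rpow_zero, one_mul]
    _ ≤ 2 ^ (τ * χ j) * 2 ^ (1 - χ j * (n + m : ℕ)) := by gcongr
    _ = 2 ^ (τ * χ j + (1 - χ j * (n + m : ℕ))) := (Real.rpow_add two_pos _ _).symm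
    _ ≤ 2 ^ (1 + T * χ j - m * χ j) := by
        refine Real.rpow_le_rpow_of_exponent_le one_le_two ?_
        push_cast
        linarith [mul_le_mul_of_nonneg_right hτ hχ]

lemma prod_two_mul_rpow_div_add_two_mul_rpow_le [Fintype κ] {T D m : ℝ} (hχ : ∀ j, 0 ≤ χ j)
    (hT : 0 ≤ T) (hD : ∀ j, χ j ≤ D) (hm : 0 ≤ m) (s : ℝ) :
    (∏ j, (2 * (2 : ℝ) ^ (1 + T * χ j - m * χ j) / 2 ^ (-(m * D)) + 2)) *
        ((2 : ℝ) ^ (-(m * D))) ^ s ≤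
      2 ^ (-(m * (∑ j, χ j - D * (Fintype.card κ - s)) - ∑ j, (3 + T * χ j))) := by
  have hfactor (j : κ) : 2 * (2 : ℝ) ^ (1 + T * χ j - m * χ j) / 2 ^ (-(m * D)) + 2 ≤
      2 ^ (3 + T * χ j - m * χ j + m * D) := by
    set e := 1 + T * χ j - m * χ j + m * D
    have he : 0 ≤ e := by
      have hTχ := mul_nonneg hT (hχ j)
      have hmD := mul_le_mul_of_nonneg_left (hD j) hm
      dsimp only [e]
      linarith
    have hquot : 2 * (2 : ℝ) ^ (1 + T * χ j - m * χ j) / 2 ^ (-(m * D)) = 2 * 2 ^ e := by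
      rw [mul_div_assoc, ← Real.rpow_sub two_pos, sub_neg_eq_add]
    have hsplit : (2 : ℝ) ^ (3 + T * χ j - m * χ j + m * D) = 4 * 2 ^ e := by
      rw [show 3 + T * χ j - m * χ j + m * D = 2 + e by ring, Real.rpow_add two_pos]
      norm_num
    rw [hquot, hsplit]
    linarith [Real.one_le_rpow one_le_two he]
  calc (∏ j, (2 * (2 : ℝ) ^ (1 + T * χ j - m * χ j) / 2 ^ (-(m * D)) + 2)) *
        ((2 : ℝ) ^ (-(m * D))) ^ s
      ≤ (∏ j, (2 : ℝ) ^ (3 + T * χ j - m * χ j + m * D)) * ((2 : ℝ) ^ (-(m * D))) ^ s := by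
        gcongr with j
        exact hfactor j
    _ = 2 ^ (∑ j, (3 + T * χ j - m * χ j + m * D) + -(m * D) * s) := by
        rw [← Real.rpow_sum_of_pos two_pos, ← Real.rpow_mul two_pos.le, ← Real.rpow_add two_pos]
    _ = 2 ^ (-(m * (∑ j, χ j - D * (Fintype.card κ - s)) - ∑ j, (3 + T * χ j))) := by
        congr 1
        simp only [Finset.sum_add_distrib, Finset.sum_sub_distrib, ← Finset.mul_sum, sum_const,
          card_univ, nsmul_eq_mul]
        ring

variable {μ : Measure (κ → ℝ)} [IsFiniteMeasure μ] {J : Finset κ} {G : Set (κ → ℝ)}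
  {n m : ℕ} {T D s : ℝ}

theorem measureReal_preimage_cell_inter_le {ρ b : κ → ℝ} {τ : ℝ} (hχ : ∀ j, 0 ≤ χ j)
    (hρ : ∀ j, |ρ j| = 2 ^ (-(τ * χ j))) (hτ : τ ≤ n + T) (hT : 0 ≤ T) (hD : ∀ j, χ j ≤ D)
    (hG : ∀ x ∈ G, μ.real (J.restrict ⁻¹' Metric.closedBall (J.restrict x) (2 ^ (-(m * D)))) ≤
      (2 ^ (-(m * D))) ^ s) (q : J → ℤ) :
    μ.real ((fun x => ρ * x + b) ⁻¹' ((fun x => J.restrict (cellIndex χ (n + m) x)) ⁻¹' {q}) ∩ G) ≤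
      2 ^ (-(m * (∑ j ∈ J, χ j - D * (#J - s)) - ∑ j ∈ J, (3 + T * χ j))) := by
  have hcover := measureReal_inter_le_of_abs_sub_le (f := J.restrict)
    (A := (fun x => ρ * x + b) ⁻¹' ((fun x => J.restrict (cellIndex χ (n + m) x)) ⁻¹' {q}))
    (S := fun j : J => 2 ^ (1 + T * χ j - m * χ j)) (by positivity) (by positivity) hG
    (fun j => by positivity) fun x hx y hy j =>
      abs_sub_le_of_cellIndex_mul_add_eq (hχ j) (hρ j) hτ
        (congrFun (Eq.trans (Set.mem_singleton_iff.1 hx) (Set.mem_singleton_iff.1 hy).symm) j)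
  refine hcover.trans ((prod_two_mul_rpow_div_add_two_mul_rpow_le (fun j : J => hχ j) hT
    (fun j : J => hD j) m.cast_nonneg s).trans_eq ?_)
  rw [Fintype.card_coe, sum_coe_sort J χ, sum_coe_sort J fun j => 3 + T * χ j]

theorem CylinderDecomposition.le_labelEntropy_sub [Fintype κ]
    (𝒟 : CylinderDecomposition χ μ n T) (hχ : ∀ j, 0 ≤ χ j) (hT : 0 ≤ T) (hD : ∀ j, χ j ≤ D)
    (hG : ∀ x ∈ G, μ.real (J.restrict ⁻¹' Metric.closedBall (J.restrict x) (2 ^ (-(m * D)))) ≤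
      (2 ^ (-(m * D))) ^ s) {R : ℝ} (hR : 0 ≤ R) (hμR : ∀ᵐ x ∂μ, ‖x‖ ≤ R) :
    (m * (∑ j ∈ J, χ j - D * (#J - s)) - ∑ j ∈ J, (3 + T * χ j)) * μ.real G -
        (2 * R + 2) ^ Fintype.card κ / Real.log 2 ≤
      labelEntropy μ (fun x => (J.restrict (cellIndex χ (n + m) x), cellIndex χ n x)) -
        labelEntropy μ (cellIndex χ n) := by
  classical
  obtain ⟨F, hF⟩ := exists_forall_cellIndex_mem_of_norm_le χ (n + m) hR
  obtain ⟨F', hF'⟩ := exists_forall_cellIndex_mem_of_norm_le χ n hR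
  have hρ (u : 𝒟.ι) (j : κ) : |𝒟.ρ u j| ≤ 2 ^ (-(χ j * n)) := by
    rw [𝒟.abs_ρ, mul_comm]
    gcongr
    · exact one_le_two
    · exact hχ j
    · exact 𝒟.le_τ u
  choose N hNC hN using fun u => exists_card_le_forall_cellIndex_mul_add_mem (hρ u) hR (𝒟.b u)
  refine mul_measureReal_sub_le_labelEntropy_sub_of_eq_hutchinson (F := F.image J.restrict)
    (F' := F') ((measurable_restrict J).comp measurable_cellIndex) measurable_cellIndex ?_ ?_
    𝒟.w_nonneg 𝒟.sum_w (fun u => measurable_mul_add (𝒟.ρ u) (𝒟.b u)) 𝒟.eq_hutchinson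
    (fun u => measureReal_preimage_cell_inter_le hχ (𝒟.abs_ρ u) (𝒟.τ_le u) hT hD hG)
    (fun u => ?_) hNC
  · filter_upwards [hμR] with x hx using mem_image_of_mem _ (hF x hx)
  · filter_upwards [hμR] with x hx using hF' x hx
  · filter_upwards [hμR] with x hx using hN u x hx

end CellMass

lemma tendsto_two_rpow_neg_natCast_mul {D : ℝ} (hD : 0 < D) :
    Tendsto (fun m : ℕ => (2 : ℝ) ^ (-(m * D))) atTop (𝓝[>] 0) := by
  refine tendsto_nhdsWithin_iff.2 ⟨?_, .of_forall fun m => Set.mem_Ioi.2 (by positivity)⟩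
  exact (tendsto_rpow_atBot_of_base_gt_one 2 one_lt_two).comp
    (tendsto_neg_atTop_atBot.comp (tendsto_natCast_atTop_atTop.atTop_mul_const hD))

lemma mul_sub_le_sub_mul_sub {m X ε η g C₁ C₂ : ℝ} (hm : 0 ≤ m) (hX : 0 ≤ X) (hε : 0 ≤ ε)
    (hC₁ : 0 ≤ C₁) (hXη : X * η ≤ ε / 3) (hgη : 1 - η ≤ g) (hg : g ≤ 1)
    (hmC : C₁ + C₂ ≤ m * (ε / 3)) : m * (X - ε) ≤ (m * (X - ε / 3) - C₁) * g - C₂ := by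
  have hloss : (m * (X - ε / 3) - C₁) * (1 - g) ≤ m * (ε / 3) := by
    calc (m * (X - ε / 3) - C₁) * (1 - g)
        ≤ m * X * (1 - g) := by
          gcongr
          linarith [mul_nonneg hm hε]
      _ ≤ m * X * η := by
          gcongr
          linarith
      _ ≤ m * (ε / 3) := by
          rw [mul_assoc]
          gcongr
  calc m * (X - ε) ≤ (m * (X - ε / 3) - C₁) - m * (ε / 3) - C₂ := by linarith
    _ ≤ (m * (X - ε / 3) - C₁) * g - C₂ := by linarith

theorem eventually_forall_le_labelEntropy_sub {κ : Type*} [Fintype κ] {χ : κ → ℝ}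
    {μ : Measure (κ → ℝ)} [IsProbabilityMeasure μ] {J : Finset κ} {T R : ℝ} (hχ : ∀ j, 0 ≤ χ j)
    (hT : 0 ≤ T) (hR : 0 ≤ R) (hμR : ∀ᵐ x ∂μ, ‖x‖ ≤ R)
    (𝒟 : ∀ n : ℕ, CylinderDecomposition χ μ n T)
    (hdim : ∀ᵐ y ∂μ.map J.restrict, Tendsto
      (fun δ => Real.log ((μ.map J.restrict).real (Metric.closedBall y δ)) / Real.log δ)
      (𝓝[>] 0) (𝓝 #J)) {ε : ℝ} (hε : 0 < ε) :
    ∀ᶠ m : ℕ in atTop, ∀ n : ℕ, m * (∑ j ∈ J, χ j - ε) ≤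
      labelEntropy μ (fun x => (J.restrict (cellIndex χ (n + m) x), cellIndex χ n x)) -
        labelEntropy μ (cellIndex χ n) := by
  set X := ∑ j ∈ J, χ j
  set D := ‖χ‖ + 1
  have hX : 0 ≤ X := Finset.sum_nonneg fun j _ => hχ j
  have hD : 0 < D := by positivity
  have hχD (j : κ) : χ j ≤ D :=
    (le_abs_self _).trans ((norm_le_pi_norm χ j).trans (lt_add_one _).le)
  set η := ε / 3 / (X + 1)
  have hη : 0 < η := by positivity
  have hXη : X * η ≤ ε / 3 := by
    have hX1 : (X + 1) * η = ε / 3 := mul_div_cancel₀ _ (by positivity)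
    linarith
  set C₁ := ∑ j ∈ J, (3 + T * χ j)
  have hC₁ : 0 ≤ C₁ := Finset.sum_nonneg fun j _ => by have := hχ j; positivity
  set C₂ := (2 * R + 2) ^ Fintype.card κ / Real.log 2
  obtain ⟨G, hGη, hG⟩ := exists_lt_measureReal_forall_eventually_closedBall_le
    (measurable_restrict J) hdim (sub_lt_self (#J : ℝ) (div_pos (div_pos hε three_pos) hD)) hη
  rw [probReal_univ] at hGη
  filter_upwards [(tendsto_two_rpow_neg_natCast_mul hD).eventually hG,
    tendsto_natCast_atTop_atTop.eventually_ge_atTop ((C₁ + C₂) / (ε / 3))] with m hmG hmC n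
  rw [div_le_iff₀ (by positivity)] at hmC
  have hentropy := (𝒟 n).le_labelEntropy_sub hχ hT hχD hmG hR hμR
  rw [sub_sub_cancel, mul_div_cancel₀ _ hD.ne'] at hentropy
  exact (mul_sub_le_sub_mul_sub m.cast_nonneg hX hε.le hC₁ hXη hGη.le measureReal_le_one
    hmC).trans hentropy

section LinearParts

variable {Λ κ : Type*} {r : Λ → κ → ℝ} {χ : κ → ℝ}

lemma abs_eq_two_rpow_neg {x c : ℝ} (hx : x ≠ 0) (h : -Real.logb 2 |x| = c) :
    |x| = 2 ^ (-c) := by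
  rw [← h, neg_neg, Real.rpow_logb two_pos (by norm_num) (abs_pos.2 hx)]

lemma exponent_pos_of_neg_logb_eq_mul [Nonempty Λ] (hr : ∀ i j, r i j ≠ 0 ∧ |r i j| < 1)
    (hsub : ∀ i, ∃ t : ℝ, 0 < t ∧ ∀ j, -Real.logb 2 |r i j| = t * χ j) (j : κ) : 0 < χ j := by
  obtain ⟨i⟩ := ‹Nonempty Λ›
  obtain ⟨t, ht, htχ⟩ := hsub i
  rw [← mul_pos_iff_of_pos_left ht, ← htχ j]
  exact neg_pos.2 (Real.logb_neg one_lt_two (abs_pos.2 (hr i j).1) (hr i j).2)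

end LinearParts

theorem stmt16_general {Λ : Type*} [Fintype Λ] {d : ℕ} {r a : Λ → Fin d → ℝ}
    (hr : ∀ i j, r i j ≠ 0 ∧ |r i j| < 1) {p : Λ → ℝ} (hp0 : ∀ i, 0 ≤ p i) (hp1 : ∑ i, p i = 1)
    {χ : Fin d → ℝ} (hsub : ∀ i, ∃ t : ℝ, 0 < t ∧ ∀ j, -Real.logb 2 |r i j| = t * χ j)
    {μ : Measure (Fin d → ℝ)} [IsProbabilityMeasure μ]
    (hμ : μ = hutchinson p (fun i x => r i * x + a i) μ) {J : Finset (Fin d)}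
    (hdim : ∀ᵐ y ∂μ.map J.restrict, Tendsto
      (fun δ => Real.log ((μ.map J.restrict).real (Metric.closedBall y δ)) / Real.log δ)
      (𝓝[>] 0) (𝓝 #J)) {ε : ℝ} (hε : 0 < ε) :
    ∀ᶠ m : ℕ in atTop, ∀ n : ℕ, ∑ j ∈ J, χ j - ε ≤
      1 / (m : ℝ) * (entJoin d χ J (n + m) n μ - entE d χ n μ) := by
  have : Nonempty Λ := not_isEmpty_iff.1 fun _ => by simp at hp1
  have hχ : ∀ j, 0 ≤ χ j := fun j => (exponent_pos_of_neg_logb_eq_mul hr hsub j).le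
  choose t ht htχ using hsub
  obtain ⟨i₀, hi₀⟩ := Finite.exists_min t
  obtain ⟨i₁, hi₁⟩ := Finite.exists_max t
  obtain ⟨R, hR, hμR⟩ :=
    exists_ae_norm_le_of_eq_hutchinson_mul_add hp0 hp1 (fun i j => (hr i j).2) hμ
  have hdecomp (n : ℕ) : Nonempty (CylinderDecomposition χ μ n (t i₁)) :=
    CylinderDecomposition.nonempty_of_le hp0 hp1
      (fun i j => abs_eq_two_rpow_neg (hr i j).1 (htχ i j)) hμ (ht i₀) hi₀ hi₁
      ((neg_nonpos.2 (ht i₁).le).trans n.cast_nonneg)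
  filter_upwards [eventually_forall_le_labelEntropy_sub hχ (ht i₁).le hR hμR
    (fun n => (hdecomp n).some) hdim hε, eventually_gt_atTop 0] with m hm hm0 n
  rw [entJoin_eq_labelEntropy, entE_eq_labelEntropy, one_div, ← div_eq_inv_mul,
    le_div_iff₀ (Nat.cast_pos.2 hm0), mul_comm]
  exact hm n

/-- Lemma 1.6 of the paper: for a diagonal self-affine measure `μ` with distinct Lyapunov
exponents whose linear parts lie in a 1-dimensional subgroup, if `dim π_J μ = |J|` then
for every `ε > 0`, all large `m` and all `n ≥ 1`,
`(1/m) H(μ, π_J^{-1}𝓔_{n+m} | 𝓔_n) ≥ Σ_{j∈J} χ_j − ε`. -/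
theorem stmt16 {Λ : Type*} [Fintype Λ] [Nonempty Λ] (d : ℕ) (hd : 1 ≤ d)
    (r a : Λ → Fin d → ℝ) (hr : ∀ i j, r i j ≠ 0 ∧ |r i j| < 1)
    (p : Λ → ℝ) (hp0 : ∀ i, 0 < p i) (hp1 : ∑ i, p i = 1)
    (χ : Fin d → ℝ) (hχdef : ∀ j, χ j = -∑ i, p i * Real.logb 2 |r i j|)
    (hχinc : StrictMono χ)
    (hsub : ∀ i : Λ, ∃ t : ℝ, 0 < t ∧ ∀ j, -Real.logb 2 |r i j| = t * χ j)
    (μ : Measure (Fin d → ℝ)) (hμprob : IsProbabilityMeasure μ)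
    (hμsa : μ = ∑ i : Λ, ENNReal.ofReal (p i) •
      Measure.map (fun x : Fin d → ℝ => fun j => r i j * x j + a i j) μ)
    (J : Finset (Fin d))
    (hdimJ : ∀ᵐ x ∂(Measure.map (fun (x : Fin d → ℝ) (j : J) => x j) μ),
      Filter.Tendsto
        (fun δ : ℝ => Real.log
            ((Measure.map (fun (x : Fin d → ℝ) (j : J) => x j) μ
              (Metric.closedBall x δ)).toReal) / Real.log δ)
        (nhdsWithin 0 (Set.Ioi 0)) (nhds (J.card : ℝ))) :
    ∀ ε : ℝ, 0 < ε → ∃ M : ℕ, 1 ≤ M ∧ ∀ m : ℕ, M ≤ m → ∀ n : ℕ, 1 ≤ n →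
      (∑ j ∈ J, χ j) - ε ≤
        (1 / (m : ℝ)) * (entJoin d χ J (n + m) n μ - entE d χ n μ) := by
  intro ε hε
  obtain ⟨M, hM⟩ := eventually_atTop.1
    (stmt16_general hr (fun i => (hp0 i).le) hp1 hsub hμsa hdimJ hε)
  exact ⟨max M 1, le_max_right M 1, fun m hm n _ => hM m (le_of_max_le_left hm) n⟩
end

section
/- Under the standing assumptions (diagonal self-affine measure μ on ℝ^d with distinct Lyapunov exponents χ₁ < … < χ_d, linear parts in a 1-dimensional subgroup), suppose dim π_{[d−1]} μ = d−1. Then lim_{n→∞} (1/n)·H(μ, 𝓔_n) = κ, where κ := χ_d·dim μ − Σ_{j=1}^{d−1}(χ_d − χ_j). -/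
open MeasureTheory Finset

/-!
Write `D_m` for the dyadic partition of level `m` and let `M = ⌊χ_d n⌋`, so that `D_M` refines the
non-conformal partition `𝓔_n`. Since `μ` is exact dimensional, `H(μ, D_M) / n → χ_d · dim μ`, and it
remains to see that `H(μ, D_M | 𝓔_n) / n → ∑ j, (χ_d - χ_j)`.

The upper bound counts: a cell of `𝓔_n` contains about `∏ j, 2 ^ ((χ_d - χ_j) n)` cells of `D_M`.
For the lower bound, conditional entropy is concave, so by stationarity `H(·, D_M | 𝓔_n)` of the
images of `μ` under the words of the system is superharmonic along the tree of words, and one may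
stop every word at the moment its contraction reaches time `n`. Because the linear parts form a
one-parameter group, the image of `μ` is then bounded on the scale of `𝓔_n` in all coordinates at
once, so the conditioning costs `O(1)`; and `D_M` resolves `μ` itself at level `(χ_d - χ_j) n` in
the direction `j`. As `π_{[d-1]} μ` has full dimension, the entropy seen there is again
`∑ j, (χ_d - χ_j) n` up to `o(n)`.
-/

open Filter Topology

section Weights

variable {ι κ : Type*} {s : Finset κ}

/-- The Shannon entropy of the normalised weights `u k / U`, `k ∈ s`, scaled by the total mass
`U = ∑ k ∈ s, u k`. -/
noncomputable def weightEntropy (s : Finset κ) (u : κ → ℝ) : ℝ :=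
  ∑ k ∈ s, Real.negMulLog (u k) - Real.negMulLog (∑ k ∈ s, u k)

theorem negMulLog_le_cross {x y : ℝ} (hx : 0 ≤ x) (hy : 0 ≤ y) (hxy : y = 0 → x = 0) :
    Real.negMulLog x ≤ -(x * Real.log y) + y - x := by
  rcases hx.eq_or_lt with rfl | hx
  · simpa using hy
  have hy' : 0 < y := hy.lt_of_ne fun h => hx.ne' (hxy h.symm)
  have hlog := mul_le_mul_of_nonneg_left (Real.log_le_sub_one_of_pos (div_pos hy' hx)) hx.le
  rw [Real.log_div hy'.ne' hx.ne', mul_sub, mul_sub, mul_div_cancel₀ y hx.ne'] at hlog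
  rw [Real.negMulLog]
  linarith

theorem weightEntropy_mul_left (c : ℝ) (u : κ → ℝ) :
    weightEntropy s (fun k => c * u k) = c * weightEntropy s u := by
  simp only [weightEntropy, ← mul_sum, Real.negMulLog_mul, sum_add_distrib, ← sum_mul]
  ring

theorem weightEntropy_le_cross {u w : κ → ℝ} (hu : ∀ k, 0 ≤ u k) (hw : ∀ k, 0 ≤ w k)
    (huw : ∀ k ∈ s, w k = 0 → u k = 0) :
    weightEntropy s u ≤ ∑ k ∈ s, u k * (Real.log (∑ k ∈ s, w k) - Real.log (w k)) := by
  set U := ∑ k ∈ s, u k with hU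
  set W := ∑ k ∈ s, w k with hW
  rcases (sum_nonneg fun k _ => hu k : 0 ≤ U).eq_or_lt with hU0 | hUpos
  · have hu0 : ∀ k ∈ s, u k = 0 := (sum_eq_zero_iff_of_nonneg fun k _ => hu k).mp hU0.symm
    have hleft : ∑ k ∈ s, Real.negMulLog (u k) = 0 := sum_eq_zero fun k hk => by simp [hu0 k hk]
    have hright : ∑ k ∈ s, u k * (Real.log W - Real.log (w k)) = 0 :=
      sum_eq_zero fun k hk => by simp [hu0 k hk]
    simp [weightEntropy, hleft, hright, ← hU0]
  have hWpos : 0 < W := by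
    refine (sum_nonneg fun k _ => hw k).lt_of_ne fun hW0 => hUpos.ne' ?_
    have hw0 := (sum_eq_zero_iff_of_nonneg fun k _ => hw k).mp hW0.symm
    exact sum_eq_zero fun k hk => huw k hk (hw0 k hk)
  -- Gibbs' inequality against the weights `w`, rescaled to the total mass `U` of `u`.
  have hgibbs : ∀ k ∈ s, Real.negMulLog (u k) ≤
      u k * (Real.log W - Real.log (w k)) - u k * Real.log U + (U / W * w k - u k) := by
    intro k hk
    refine (negMulLog_le_cross (hu k) (mul_nonneg (div_pos hUpos hWpos).le (hw k)) fun h =>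
      huw k hk ((mul_eq_zero.mp h).resolve_left (div_pos hUpos hWpos).ne')).trans_eq ?_
    by_cases h : w k = 0
    · simp [huw k hk h, h]
    · rw [Real.log_mul (div_pos hUpos hWpos).ne' h, Real.log_div hUpos.ne' hWpos.ne']
      ring
  have hsum := sum_le_sum hgibbs
  rw [sum_add_distrib, sum_sub_distrib, sum_sub_distrib, ← sum_mul, ← mul_sum, ← hU, ← hW,
    div_mul_cancel₀ U hWpos.ne', sub_self, add_zero] at hsum
  rw [weightEntropy, ← hU, Real.negMulLog]
  linarith

theorem weightEntropy_le_mul_log_card {u : κ → ℝ} (hu : ∀ k, 0 ≤ u k) :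
    weightEntropy s u ≤ (∑ k ∈ s, u k) * Real.log #s := by
  simpa [← sum_mul] using weightEntropy_le_cross (s := s) (w := fun _ => 1) hu (by simp) (by simp)

theorem weightEntropy_nonneg {u : κ → ℝ} (hu : ∀ k, 0 ≤ u k) : 0 ≤ weightEntropy s u := by
  rw [weightEntropy, sub_nonneg, Real.negMulLog, ← sum_neg_distrib, sum_mul]
  refine sum_le_sum fun k hk => ?_
  rcases (hu k).eq_or_lt with h0 | hpos
  · simp [← h0]
  · have hlog := Real.log_le_log hpos (single_le_sum (fun k _ => hu k) hk)
    rw [Real.negMulLog]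
    nlinarith

theorem sum_weightEntropy_le_weightEntropy_sum (t : Finset ι) {u : ι → κ → ℝ}
    (hu : ∀ i k, 0 ≤ u i k) :
    ∑ i ∈ t, weightEntropy s (u i) ≤ weightEntropy s (fun k => ∑ i ∈ t, u i k) := by
  set v : κ → ℝ := fun k => ∑ i ∈ t, u i k
  have hcross : ∀ i ∈ t, weightEntropy s (u i) ≤
      ∑ k ∈ s, u i k * (Real.log (∑ k ∈ s, v k) - Real.log (v k)) := fun i hi =>
    weightEntropy_le_cross (hu i) (fun k => sum_nonneg fun i _ => hu i k) fun k _ hk =>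
      (sum_eq_zero_iff_of_nonneg fun i _ => hu i k).mp hk i hi
  refine (sum_le_sum hcross).trans_eq ?_
  rw [sum_comm]
  simp only [← sum_mul]
  simp only [weightEntropy, Real.negMulLog, mul_sub, sum_sub_distrib, ← sum_mul, neg_mul,
    sum_neg_distrib]
  ring

end Weights

section Entropy

variable {κ κ' X : Type*} [MeasurableSpace κ] [MeasurableSpace κ'] [MeasurableSpace X]

/-- Shannon entropy, in nats, of a law `ν` on a discrete space. The entropy of `μ` with respect to
the partition into the fibres of `q` is `shannonEntropy (μ.map q)`. -/
noncomputable def shannonEntropy (ν : Measure κ) : ℝ :=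
  ∑' k, Real.negMulLog (ν.real {k})

/-- The conditional entropy of a `ν`-distributed point given its image under `g`. -/
noncomputable def condEntropy (g : κ → κ') (ν : Measure κ) : ℝ :=
  shannonEntropy ν - shannonEntropy (ν.map g)

theorem shannonEntropy_eq_sum {ν : Measure κ} {S : Finset κ} (hS : ∀ᵐ k ∂ν, k ∈ S) :
    shannonEntropy ν = ∑ k ∈ S, Real.negMulLog (ν.real {k}) :=
  tsum_eq_sum fun k hk => by
    have hnull : ν {k} = 0 :=
      measure_mono_null (Set.singleton_subset_iff.mpr hk) (mem_ae_iff.mp hS)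
    rw [Measure.real, hnull, ENNReal.toReal_zero, Real.negMulLog_zero]

theorem ae_measureReal_singleton_pos {ν : Measure κ} [IsFiniteMeasure ν] {S : Finset κ}
    (hS : ∀ᵐ k ∂ν, k ∈ S) : ∀ᵐ k ∂ν, 0 < ν.real {k} := by
  have hnull : ∀ᵐ k ∂ν, ∀ l ∈ S, ν {l} = 0 → k ≠ l :=
    (Finset.eventually_all S).mpr fun l _ => by
      by_cases hl : ν {l} = 0
      · filter_upwards [measure_eq_zero_iff_ae_notMem.mp hl] with k hk _
        exact hk
      · exact Eventually.of_forall fun _ h => absurd h hl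
  filter_upwards [hS, hnull] with k hk hk'
  exact ENNReal.toReal_pos (fun h => hk' k hk h rfl) (measure_ne_top _ _)

theorem shannonEntropy_unit (ν : Measure Unit) [IsProbabilityMeasure ν] :
    shannonEntropy ν = 0 := by
  simp [shannonEntropy_eq_sum (ν := ν) (S := univ) (by simp), Set.eq_univ_of_univ_subset]

section DiscreteLaw

variable [DiscreteMeasurableSpace κ] {ν : Measure κ} {S : Finset κ}

theorem integrable_of_ae_mem_finset [IsFiniteMeasure ν] (hS : ∀ᵐ k ∂ν, k ∈ S) (f : κ → ℝ) :
    Integrable f ν := by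
  rw [← Measure.restrict_eq_self_of_ae_mem (s := (S : Set κ)) hS]
  exact IntegrableOn.finset

theorem integral_eq_sum_of_ae_mem_finset [IsFiniteMeasure ν] (hS : ∀ᵐ k ∂ν, k ∈ S) (f : κ → ℝ) :
    ∫ k, f k ∂ν = ∑ k ∈ S, ν.real {k} * f k := by
  rw [← Measure.restrict_eq_self_of_ae_mem (s := (S : Set κ)) hS,
    setIntegral_finset S IntegrableOn.finset]
  simp [Measure.restrict_eq_self_of_ae_mem (s := (S : Set κ)) hS]

theorem shannonEntropy_eq_integral [IsFiniteMeasure ν] (hS : ∀ᵐ k ∂ν, k ∈ S) :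
    shannonEntropy ν = ∫ k, -Real.log (ν.real {k}) ∂ν := by
  rw [shannonEntropy_eq_sum hS, integral_eq_sum_of_ae_mem_finset hS]
  simp [Real.negMulLog]

theorem shannonEntropy_le_integral_neg_log [IsProbabilityMeasure ν] (hS : ∀ᵐ k ∂ν, k ∈ S)
    {w : κ → ℝ} (hw : ∀ k, 0 < w k) :
    shannonEntropy ν ≤ ∫ k, -Real.log (w k) ∂ν + ∑ k ∈ S, w k := by
  rw [shannonEntropy_eq_sum hS, integral_eq_sum_of_ae_mem_finset hS, ← sum_add_distrib]
  refine sum_le_sum fun k _ => ?_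
  have hcross := negMulLog_le_cross (measureReal_nonneg (μ := ν) (s := {k})) (hw k).le
    fun h => absurd h (hw k).ne'
  have := measureReal_nonneg (μ := ν) (s := {k})
  linarith

variable [MeasurableSingletonClass κ']

theorem measureReal_map_singleton [DecidableEq κ'] [IsFiniteMeasure ν] (hS : ∀ᵐ k ∂ν, k ∈ S)
    (g : κ → κ') (e : κ') :
    (ν.map g).real {e} = ∑ k ∈ S with g k = e, ν.real {k} := by
  rw [map_measureReal_apply .of_discrete (measurableSet_singleton e), sum_measureReal_singleton]
  refine measureReal_congr ?_
  filter_upwards [hS] with k hk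
  exact propext (show k ∈ g ⁻¹' {e} ↔ k ∈ ((S.filter (g · = e) : Finset κ) : Set κ) by simp [hk])

theorem condEntropy_eq_sum [DecidableEq κ'] [IsFiniteMeasure ν] (hS : ∀ᵐ k ∂ν, k ∈ S)
    (g : κ → κ') :
    condEntropy g ν = ∑ e ∈ S.image g, weightEntropy {k ∈ S | g k = e} fun k => ν.real {k} := by
  have hgS : ∀ᵐ e ∂ν.map g, e ∈ S.image g :=
    (ae_map_iff (Measurable.of_discrete).aemeasurable (Finset.measurableSet _)).mpr
      (hS.mono fun k hk => mem_image_of_mem g hk)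
  simp only [condEntropy, weightEntropy, shannonEntropy_eq_sum hS, shannonEntropy_eq_sum hgS,
    measureReal_map_singleton hS, sum_sub_distrib]
  rw [sum_fiberwise_of_maps_to fun k hk => mem_image_of_mem g hk]

theorem condEntropy_nonneg [IsFiniteMeasure ν] (hS : ∀ᵐ k ∂ν, k ∈ S) (g : κ → κ') :
    0 ≤ condEntropy g ν := by
  classical
  rw [condEntropy_eq_sum hS]
  exact sum_nonneg fun e _ => weightEntropy_nonneg fun _ => measureReal_nonneg

theorem condEntropy_le_log [DecidableEq κ'] [IsProbabilityMeasure ν] (hS : ∀ᵐ k ∂ν, k ∈ S)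
    {g : κ → κ'} {N : ℝ}
    (hN : ∀ e, (#{k ∈ S | g k = e} : ℝ) ≤ N) : condEntropy g ν ≤ Real.log N := by
  rw [condEntropy_eq_sum hS]
  have hfibre : ∀ e ∈ S.image g, weightEntropy {k ∈ S | g k = e} (fun k => ν.real {k}) ≤
      (∑ k ∈ S with g k = e, ν.real {k}) * Real.log N := by
    intro e he
    obtain ⟨k, hk, hke⟩ := mem_image.mp he
    have hcard : 0 < #{k ∈ S | g k = e} := card_pos.mpr ⟨k, mem_filter.mpr ⟨hk, hke⟩⟩
    exact (weightEntropy_le_mul_log_card fun _ => measureReal_nonneg).trans <|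
      mul_le_mul_of_nonneg_left (Real.log_le_log (by exact_mod_cast hcard) (hN e))
        (sum_nonneg fun _ _ => measureReal_nonneg)
  refine (sum_le_sum hfibre).trans_eq ?_
  have hmass : ∑ k ∈ S, ν.real {k} = 1 := by
    simpa using (integral_eq_sum_of_ae_mem_finset hS fun _ => 1).symm
  rw [← sum_mul, sum_fiberwise_of_maps_to fun k hk => mem_image_of_mem g hk, hmass, one_mul]

theorem condEntropy_smul [IsFiniteMeasure ν] (hS : ∀ᵐ k ∂ν, k ∈ S) (g : κ → κ') {c : ENNReal}
    (hc : c ≠ ⊤) : condEntropy g (c • ν) = c.toReal * condEntropy g ν := by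
  classical
  have := Measure.smul_finite ν hc
  rw [condEntropy_eq_sum hS, condEntropy_eq_sum (Measure.ae_smul_measure hS c), mul_sum]
  simp only [measureReal_ennreal_smul_apply, weightEntropy_mul_left]

theorem sum_condEntropy_le_condEntropy_sum {Λ : Type*} (t : Finset Λ) {ν : Λ → Measure κ}
    [∀ i, IsFiniteMeasure (ν i)] (hS : ∀ i, ∀ᵐ k ∂ν i, k ∈ S) (g : κ → κ') :
    ∑ i ∈ t, condEntropy g (ν i) ≤ condEntropy g (∑ i ∈ t, ν i) := by
  classical
  have hSsum : ∀ᵐ k ∂∑ i ∈ t, ν i, k ∈ S := ae_finsetSum_measure_iff.mpr fun i _ => hS i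
  have hreal : ∀ k, (∑ i ∈ t, ν i).real {k} = ∑ i ∈ t, (ν i).real {k} := fun k => by
    simp only [Measure.real, Measure.coe_finsetSum, Finset.sum_apply]
    exact ENNReal.toReal_sum fun i _ => measure_ne_top (ν i) _
  simp only [condEntropy_eq_sum (hS _), condEntropy_eq_sum hSsum, hreal]
  rw [sum_comm]
  exact sum_le_sum fun e _ =>
    sum_weightEntropy_le_weightEntropy_sum t fun _ _ => measureReal_nonneg

end DiscreteLaw

end Entropy

section Comparison

variable {κ κ' X : Type*} [MeasurableSpace κ] [MeasurableSpace κ'] [MeasurableSpace X]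
  [DiscreteMeasurableSpace κ] [DiscreteMeasurableSpace κ'] {μ : Measure X} [IsProbabilityMeasure μ]

theorem shannonEntropy_map_le_add_log [Countable κ] [Countable κ'] {q : X → κ} {q' : X → κ'}
    (hq : Measurable q) (hq' : Measurable q') {S : Finset κ} (hS : ∀ᵐ x ∂μ, q x ∈ S)
    {F : κ → Finset κ'} (hF : ∀ᵐ x ∂μ, q' x ∈ F (q x)) {N : ℝ} (hN : ∀ k, (#(F k) : ℝ) ≤ N) :
    shannonEntropy (μ.map q') ≤ shannonEntropy (μ.map q) + Real.log N := by
  classical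
  have hpair : Measurable fun x => (q x, q' x) := hq.prodMk hq'
  have := Measure.isProbabilityMeasure_map (μ := μ) hpair.aemeasurable
  set T : Finset (κ × κ') := S.biUnion fun k => {k} ×ˢ F k with hTdef
  have hT : ∀ᵐ z ∂μ.map fun x => (q x, q' x), z ∈ T := by
    refine (ae_map_iff hpair.aemeasurable (Finset.measurableSet T)).mpr ?_
    filter_upwards [hS, hF] with x hx hx'
    simp [hTdef, hx, hx']
  have hfibre : ∀ k, (#{z ∈ T | z.1 = k} : ℝ) ≤ N := by
    refine fun k => le_trans ?_ (hN k)
    norm_cast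
    refine card_le_card_of_injOn Prod.snd ?_ ?_
    · rintro ⟨k', l⟩ hz
      simp only [hTdef, coe_filter, mem_biUnion, mem_product, mem_singleton,
        Set.mem_ofPred_eq] at hz
      obtain ⟨⟨_, -, rfl, hl⟩, rfl⟩ := hz
      exact hl
    · rintro ⟨_, l⟩ hz ⟨_, l'⟩ hz' rfl
      exact Prod.ext ((mem_filter.mp hz).2.trans (mem_filter.mp hz').2.symm) rfl
  have hfst := condEntropy_le_log hT hfibre
  have hsnd := condEntropy_nonneg hT Prod.snd
  rw [condEntropy, Measure.map_map .of_discrete hpair] at hfst hsnd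
  simp only [Function.comp_def] at hfst hsnd
  linarith

end Comparison

section Grid

variable {ι : Type*}

theorem log_two_mul_two_rpow_add_two_le {ρ : ℝ} (hρ : 0 ≤ ρ) :
    Real.log (2 * 2 ^ ρ + 2) ≤ Real.log 4 + ρ * Real.log 2 := by
  have hone : (1 : ℝ) ≤ 2 ^ ρ := Real.one_le_rpow one_le_two hρ
  rw [← Real.log_rpow two_pos, ← Real.log_mul four_ne_zero (by positivity)]
  exact Real.log_le_log (by positivity) (by linarith)

/-- The dyadic cell of side `2 ^ (-l j)` in the direction `j` containing `x`, encoded by its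
integer coordinates. -/
noncomputable def dyadicIndex (l : ι → ℕ) (x : ι → ℝ) : ι → ℤ :=
  fun j => ⌊2 ^ l j * x j⌋

theorem measurable_dyadicIndex (l : ι → ℕ) : Measurable (dyadicIndex l) :=
  measurable_pi_lambda _ fun j => Int.measurable_floor.comp ((measurable_pi_apply j).const_mul _)

theorem exists_dyadicIndex_eq_comp {l m : ι → ℕ} (hlm : l ≤ m) :
    ∃ g : (ι → ℤ) → ι → ℤ, dyadicIndex l = g ∘ dyadicIndex m := by
  refine ⟨fun k j => k j / ((2 ^ (m j - l j) : ℕ) : ℤ), funext fun x => funext fun j => ?_⟩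
  have hscale : (2 : ℝ) ^ l j * x j = 2 ^ m j * x j / (2 ^ (m j - l j) : ℕ) := by
    rw [eq_div_iff (by positivity), Nat.cast_pow, Nat.cast_ofNat, mul_right_comm, ← pow_add,
      Nat.add_sub_cancel' (hlm j)]
  simp only [dyadicIndex, Function.comp_apply, hscale, Int.floor_div_natCast]

theorem abs_sub_le_of_dyadicIndex_eq {l : ι → ℕ} {x y : ι → ℝ}
    (h : dyadicIndex l x = dyadicIndex l y) (j : ι) : |x j - y j| ≤ (2 ^ l j)⁻¹ := by
  have hlt := Int.abs_sub_lt_one_of_floor_eq_floor (congrFun h j)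
  rw [← mul_sub, abs_mul, abs_of_pos (by positivity)] at hlt
  rw [← one_div, le_div_iff₀' (by positivity)]
  exact hlt.le

variable [Fintype ι]

open scoped Classical in
/-- The integer points of the coordinatewise `L`-neighbourhood of `y`, together with the integer
parts of all its real points. -/
noncomputable def floorBox (y L : ι → ℝ) : Finset (ι → ℤ) :=
  Icc (fun j => ⌊y j - L j⌋) fun j => ⌊y j + L j⌋

theorem floor_mem_floorBox {x y L : ι → ℝ} (h : ∀ j, |x j - y j| ≤ L j) :
    (fun j => ⌊x j⌋) ∈ floorBox y L := by
  classical
  refine mem_Icc.mpr ⟨fun j => Int.floor_le_floor ?_, fun j => Int.floor_le_floor ?_⟩ <;>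
    linarith [abs_le.mp (h j)]

theorem card_floorBox_le {y L : ι → ℝ} (hL : ∀ j, 0 ≤ L j) :
    (#(floorBox y L) : ℝ) ≤ ∏ j, (2 * L j + 2) := by
  classical
  rw [floorBox, Pi.card_Icc, Nat.cast_prod]
  refine prod_le_prod (fun j _ => Nat.cast_nonneg _) fun j _ => ?_
  have hle : ⌊y j - L j⌋ ≤ ⌊y j + L j⌋ + 1 :=
    (Int.floor_le_floor (by linarith [hL j])).trans (Int.le_add_one le_rfl)
  rw [Int.card_Icc, ← Int.cast_natCast, Int.toNat_of_nonneg (by linarith)]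
  push_cast
  linarith [Int.floor_le (y j + L j), Int.lt_floor_add_one (y j - L j)]

theorem dyadicIndex_mem_floorBox (l : ι → ℕ) {R : ℝ} {x : ι → ℝ} (hx : ‖x‖ ≤ R) :
    dyadicIndex l x ∈ floorBox 0 fun j => 2 ^ l j * R := by
  refine floor_mem_floorBox fun j => ?_
  rw [Pi.zero_apply, sub_zero, abs_mul, abs_of_pos (by positivity)]
  exact mul_le_mul_of_nonneg_left ((norm_le_pi_norm x j).trans hx) (by positivity)

theorem shannonEntropy_map_floor_le {κ X : Type*} [MeasurableSpace κ] [DiscreteMeasurableSpace κ]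
    [Countable κ] [MeasurableSpace X] {μ : Measure X} [IsProbabilityMeasure μ] {q : X → κ}
    {h : X → ι → ℝ} (hq : Measurable q) (hh : Measurable h) {B : Set X} (hB : ∀ᵐ x ∂μ, x ∈ B)
    {S : Finset κ} (hS : ∀ x ∈ B, q x ∈ S) {L : ι → ℝ}
    (hL : ∀ x ∈ B, ∀ y ∈ B, q x = q y → ∀ j, |h x j - h y j| ≤ L j) :
    shannonEntropy (μ.map fun x j => ⌊h x j⌋) ≤
      shannonEntropy (μ.map q) + ∑ j, Real.log (2 * L j + 2) := by
  classical
  obtain ⟨x₀, hx₀⟩ := hB.exists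
  have hLpos : ∀ j, 0 ≤ L j := fun j => (abs_nonneg _).trans (hL x₀ hx₀ x₀ hx₀ rfl j)
  set F : κ → Finset (ι → ℤ) := fun k =>
    if hk : ∃ y ∈ B, q y = k then floorBox (h hk.choose) L else ∅ with hF
  have hmem : ∀ x ∈ B, (fun j => ⌊h x j⌋) ∈ F (q x) := by
    intro x hx
    have hk : ∃ y ∈ B, q y = q x := ⟨x, hx, rfl⟩
    simp only [hF, dif_pos hk]
    exact floor_mem_floorBox (hL x hx _ hk.choose_spec.1 hk.choose_spec.2.symm)
  have hcard : ∀ k, (#(F k) : ℝ) ≤ ∏ j, (2 * L j + 2) := by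
    intro k
    by_cases hk : ∃ y ∈ B, q y = k
    · simpa only [hF, dif_pos hk] using card_floorBox_le hLpos
    · simpa only [hF, dif_neg hk, card_empty, Nat.cast_zero] using
        prod_nonneg fun j _ => by linarith [hLpos j]
  rw [← Real.log_prod fun j _ => by linarith [hLpos j]]
  exact shannonEntropy_map_le_add_log hq
    (measurable_pi_lambda _ fun j => Int.measurable_floor.comp (measurable_pi_iff.mp hh j))
    (hB.mono hS) (hB.mono hmem) hcard

end Grid

section EntropyDimension

variable {X : Type*} [PseudoMetricSpace X] [MeasurableSpace X]

/-- `μ` is exact dimensional of dimension `D`: almost every point has local dimension `D`. -/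
def IsExactDimensional (μ : Measure X) (D : ℝ) : Prop :=
  ∀ᵐ x ∂μ, Tendsto (fun δ => Real.log (μ (Metric.closedBall x δ)).toReal / Real.log δ)
    (𝓝[>] 0) (𝓝 D)

/-- The information `-log μ(B(x, r))` of the closed ball of radius `r` around `x`, truncated
at `C`. -/
noncomputable def ballInformation (μ : Measure X) (r C : ℝ) (x : X) : ℝ :=
  min (-Real.log (μ.real (Metric.closedBall x r))) C

section

variable {μ : Measure X} [IsProbabilityMeasure μ]

theorem abs_ballInformation_le {r C : ℝ} (hC : 0 ≤ C) (x : X) : |ballInformation μ r C x| ≤ C := by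
  have hlog := Real.log_nonpos (measureReal_nonneg (μ := μ) (s := Metric.closedBall x r))
    measureReal_le_one
  exact abs_le.mpr ⟨(neg_nonpos.mpr hC).trans (le_min (neg_nonneg.mpr hlog) hC), min_le_right _ _⟩

variable [OpensMeasurableSpace X] [SecondCountableTopology X]

theorem measurable_measureReal_closedBall (r : ℝ) :
    Measurable fun x => μ.real (Metric.closedBall x r) := by
  have hmeas : MeasurableSet {z : X × X | dist z.2 z.1 ≤ r} :=
    (isClosed_le (continuous_snd.dist continuous_fst) continuous_const).measurableSet
  exact (measurable_measure_prodMk_left hmeas).ennreal_toReal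

theorem measurable_ballInformation (r C : ℝ) : Measurable (ballInformation μ r C) :=
  (Real.measurable_log.comp (measurable_measureReal_closedBall r)).neg.min measurable_const

theorem integrable_ballInformation (r : ℝ) {C : ℝ} (hC : 0 ≤ C) :
    Integrable (ballInformation μ r C) μ :=
  .of_bound (measurable_ballInformation r C).aestronglyMeasurable C
    (ae_of_all _ fun x => abs_ballInformation_le hC x)

theorem IsExactDimensional.tendsto_integral_ballInformation_div {D C : ℝ}
    (hD : IsExactDimensional μ D) (hC : 0 ≤ C) (hDC : D * Real.log 2 ≤ C) :
    Tendsto (fun m : ℕ => (∫ x, ballInformation μ ((2 ^ m)⁻¹) (C * m) x ∂μ) / m) atTop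
      (𝓝 (D * Real.log 2)) := by
  have hscale : Tendsto (fun m : ℕ => ((2 : ℝ) ^ m)⁻¹) atTop (𝓝[>] 0) := by
    refine tendsto_nhdsWithin_iff.mpr ⟨?_, Eventually.of_forall fun m => by simp⟩
    simpa only [inv_pow] using tendsto_pow_atTop_nhds_zero_of_lt_one (r := (2 : ℝ)⁻¹)
      (by norm_num) (by norm_num)
  have hlim : ∀ᵐ x ∂μ, Tendsto (fun m : ℕ => ballInformation μ ((2 ^ m)⁻¹) (C * m) x / m) atTop
      (𝓝 (D * Real.log 2)) := by
    filter_upwards [hD] with x hx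
    have hmin := (((hx.comp hscale).mul_const (Real.log 2)).min
      (tendsto_const_nhds (x := C))).congr' (f₂ := fun m : ℕ =>
        ballInformation μ ((2 ^ m)⁻¹) (C * m) x / m) ?_
    · rwa [min_eq_left hDC] at hmin
    filter_upwards [eventually_gt_atTop 0] with m hm
    have hm' : (0 : ℝ) < m := Nat.cast_pos.mpr hm
    rw [ballInformation, ← min_div_div_right hm'.le, mul_div_cancel_right₀ C hm'.ne',
      Function.comp_apply, Real.log_inv, Real.log_pow, Measure.real]
    congr 1
    field_simp [(Real.log_pos one_lt_two).ne']
  have hbound : ∀ (m : ℕ) (x : X), ‖ballInformation μ ((2 ^ m)⁻¹) (C * m) x / m‖ ≤ C := by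
    intro m x
    rw [norm_div, Real.norm_natCast]
    exact div_le_of_le_mul₀ m.cast_nonneg hC (abs_ballInformation_le (by positivity) x)
  simpa only [integral_div, integral_const, probReal_univ, one_smul] using
    tendsto_integral_of_dominated_convergence (fun _ => C)
      (fun m => ((measurable_ballInformation _ _).div_const _).aestronglyMeasurable)
      (integrable_const C) (fun m => ae_of_all _ (hbound m)) hlim

end

section Cells

variable {κ : Type*} [MeasurableSpace κ] [DiscreteMeasurableSpace κ] {μ : Measure X}
  [IsProbabilityMeasure μ] {q : X → κ} {S : Finset κ}

theorem ae_measureReal_map_singleton_mem_Ioc (hq : Measurable q) (hS : ∀ᵐ x ∂μ, q x ∈ S) {r : ℝ}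
    (hr : ∀ x y, q x = q y → dist x y ≤ r) :
    ∀ᵐ x ∂μ, (μ.map q).real {q x} ∈ Set.Ioc 0 (μ.real (Metric.closedBall x r)) := by
  have := Measure.isProbabilityMeasure_map (μ := μ) hq.aemeasurable
  have hSmap : ∀ᵐ k ∂μ.map q, k ∈ S :=
    (ae_map_iff hq.aemeasurable (Finset.measurableSet S)).mpr hS
  filter_upwards [ae_of_ae_map hq.aemeasurable (ae_measureReal_singleton_pos hSmap)] with x hx
  refine ⟨hx, ?_⟩
  rw [map_measureReal_apply hq (measurableSet_singleton _)]
  exact measureReal_mono fun y hy => hr y x hy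

variable [OpensMeasurableSpace X] [SecondCountableTopology X]

theorem integral_ballInformation_le_shannonEntropy (hq : Measurable q) (hS : ∀ᵐ x ∂μ, q x ∈ S)
    {r C : ℝ} (hr : ∀ x y, q x = q y → dist x y ≤ r) (hC : 0 ≤ C) :
    ∫ x, ballInformation μ r C x ∂μ ≤ shannonEntropy (μ.map q) := by
  have := Measure.isProbabilityMeasure_map (μ := μ) hq.aemeasurable
  have hSmap : ∀ᵐ k ∂μ.map q, k ∈ S :=
    (ae_map_iff hq.aemeasurable (Finset.measurableSet S)).mpr hS
  rw [shannonEntropy_eq_integral hSmap,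
    integral_map hq.aemeasurable (Measurable.of_discrete).aestronglyMeasurable]
  refine integral_mono_ae (integrable_ballInformation r hC)
    ((integrable_of_ae_mem_finset hSmap fun k =>
      -Real.log ((μ.map q).real {k})).comp_measurable hq) ?_
  filter_upwards [ae_measureReal_map_singleton_mem_Ioc hq hS hr] with x hx
  exact (min_le_left _ _).trans (neg_le_neg (Real.log_le_log hx.1 hx.2))

theorem shannonEntropy_le_integral_ballInformation (hq : Measurable q) (hS : ∀ᵐ x ∂μ, q x ∈ S)
    {r C K : ℝ} (hr : ∀ x y, q x = q y → dist x y ≤ r) (hC : 0 ≤ C) (hSC : Real.log #S ≤ C)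
    {Q : κ → Set κ} (hQ : ∀ x y, dist x y ≤ r → q x ∈ Q (q y))
    (hK : ∑ k ∈ S, (μ.map q).real (Q k) ≤ K) :
    shannonEntropy (μ.map q) ≤ ∫ x, ballInformation μ r C x ∂μ + (K + 1) := by
  have := Measure.isProbabilityMeasure_map (μ := μ) hq.aemeasurable
  have hSmap : ∀ᵐ k ∂μ.map q, k ∈ S :=
    (ae_map_iff hq.aemeasurable (Finset.measurableSet S)).mpr hS
  -- The weights for Gibbs' inequality; the cutoff at `exp (-C)` matches the truncation at `C`.
  set w : κ → ℝ := fun k => max ((μ.map q).real (Q k)) (Real.exp (-C))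
  have hwpos : ∀ k, 0 < w k := fun k => (Real.exp_pos _).trans_le (le_max_right _ _)
  have hmass : ∑ k ∈ S, w k ≤ K + 1 := by
    obtain ⟨x, hx⟩ := hS.exists
    have hcard : (0 : ℝ) < #S := Nat.cast_pos.mpr (card_pos.mpr ⟨_, hx⟩)
    calc ∑ k ∈ S, w k
        ≤ ∑ k ∈ S, ((μ.map q).real (Q k) + Real.exp (-C)) :=
          sum_le_sum fun k _ => max_le_add_of_nonneg measureReal_nonneg (Real.exp_pos _).le
      _ = ∑ k ∈ S, (μ.map q).real (Q k) + #S * Real.exp (-C) := by simp [sum_add_distrib]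
      _ ≤ K + Real.exp C * Real.exp (-C) := by
          gcongr
          exact (Real.log_le_iff_le_exp hcard).mp hSC
      _ = K + 1 := by rw [← Real.exp_add, add_neg_cancel, Real.exp_zero]
  refine (shannonEntropy_le_integral_neg_log hSmap hwpos).trans (add_le_add ?_ hmass)
  rw [integral_map hq.aemeasurable (Measurable.of_discrete).aestronglyMeasurable]
  refine integral_mono_ae
    ((integrable_of_ae_mem_finset hSmap fun k => -Real.log (w k)).comp_measurable hq)
    (integrable_ballInformation r hC) ?_
  filter_upwards [ae_measureReal_map_singleton_mem_Ioc hq hS hr] with x hx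
  have hball : μ.real (Metric.closedBall x r) ≤ w (q x) := by
    refine le_trans ?_ (le_max_left _ _)
    rw [map_measureReal_apply hq .of_discrete]
    exact measureReal_mono fun y hy => hQ y x hy
  refine le_min (neg_le_neg (Real.log_le_log (hx.1.trans_le hx.2) hball)) ?_
  rw [neg_le, ← Real.log_exp (-C)]
  exact Real.log_le_log (Real.exp_pos _) (le_max_right _ _)

end Cells

variable {ι : Type*} [Fintype ι]

theorem sum_measureReal_closedBall_one_le (ν : Measure (ι → ℤ)) [IsProbabilityMeasure ν]
    (S : Finset (ι → ℤ)) :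
    ∑ k ∈ S, ν.real (Metric.closedBall k 1) ≤ 4 ^ Fintype.card ι := by
  classical
  have hcard : ∀ l : ι → ℤ, (#{k ∈ S | l ∈ Metric.closedBall k 1} : ℝ) ≤ 4 ^ Fintype.card ι := by
    intro l
    have hsub : {k ∈ S | l ∈ Metric.closedBall k 1} ⊆ floorBox (fun j => (l j : ℝ)) fun _ => 1 := by
      intro k hk
      have hdist := (dist_pi_le_iff zero_le_one).mp (Metric.mem_closedBall'.mp (mem_filter.mp hk).2)
      simpa using floor_mem_floorBox (x := fun j => (k j : ℝ)) hdist
    refine (Nat.cast_le.mpr (card_le_card hsub)).trans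
      ((card_floorBox_le fun _ => zero_le_one).trans_eq ?_)
    rw [prod_const, card_univ]
    norm_num
  calc ∑ k ∈ S, ν.real (Metric.closedBall k 1)
      = ∑ k ∈ S, ∫ l, (Metric.closedBall k 1).indicator 1 l ∂ν := by
        simp only [integral_indicator_one (MeasurableSet.of_discrete)]
    _ = ∫ l, ∑ k ∈ S, (Metric.closedBall k 1).indicator 1 l ∂ν :=
        (integral_finsetSum S fun k _ => (integrable_const 1).indicator .of_discrete).symm
    _ ≤ ∫ _, 4 ^ Fintype.card ι ∂ν := by
        refine integral_mono (integrable_finsetSum S fun k _ =>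
          (integrable_const 1).indicator .of_discrete) (integrable_const _) fun l => ?_
        simpa [Set.indicator_apply] using hcard l
    _ = 4 ^ Fintype.card ι := by simp

theorem dist_dyadicIndex_le_one {l : ℕ} {x y : ι → ℝ} (h : dist x y ≤ (2 ^ l)⁻¹) :
    dist (dyadicIndex (fun _ => l) x) (dyadicIndex (fun _ => l) y) ≤ 1 := by
  refine (dist_pi_le_iff zero_le_one).mpr fun j => ?_
  have hj : |2 ^ l * x j - 2 ^ l * y j| ≤ 1 := by
    rw [← mul_sub, abs_mul, abs_of_pos (by positivity), ← le_div_iff₀' (by positivity), one_div]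
    exact (dist_le_pi_dist x y j).trans h
  rw [abs_le] at hj
  have hle : ⌊2 ^ l * x j⌋ ≤ ⌊2 ^ l * y j + 1⌋ := Int.floor_le_floor (by linarith)
  have hge : ⌊2 ^ l * y j⌋ ≤ ⌊2 ^ l * x j + 1⌋ := Int.floor_le_floor (by linarith)
  rw [Int.floor_add_one] at hle hge
  have habs : |⌊2 ^ l * x j⌋ - ⌊2 ^ l * y j⌋| ≤ 1 := abs_le.mpr ⟨by linarith, by linarith⟩
  simp only [Int.dist_eq, dyadicIndex]
  exact_mod_cast habs

theorem log_card_floorBox_le {m : ℕ} (hm : 0 < m) {R : ℝ} (hR : 0 ≤ R) :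
    Real.log #(floorBox 0 fun _ : ι => 2 ^ m * R) ≤
      Fintype.card ι * (Real.log 2 + Real.log (2 * R + 2)) * m := by
  have hpos : 0 ≤ Real.log (2 * R + 2) := Real.log_nonneg (by linarith)
  have hm1 : (1 : ℝ) ≤ m := Nat.one_le_cast.mpr hm
  have hone : (1 : ℝ) ≤ 2 ^ m := one_le_pow₀ one_le_two
  have hcard : (#(floorBox 0 fun _ : ι => 2 ^ m * R) : ℝ) ≤
      (2 ^ m * (2 * R + 2)) ^ Fintype.card ι := by
    refine (card_floorBox_le fun _ => by positivity).trans ?_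
    rw [prod_const, card_univ]
    gcongr
    linarith
  rcases (Nat.cast_nonneg (α := ℝ) #(floorBox 0 fun _ : ι => 2 ^ m * R)).eq_or_lt with h0 | h0
  · rw [← h0, Real.log_zero]
    positivity
  refine (Real.log_le_log h0 hcard).trans ?_
  rw [Real.log_pow, Real.log_mul (by positivity) (by positivity), Real.log_pow, mul_assoc]
  gcongr
  nlinarith

theorem IsExactDimensional.tendsto_shannonEntropy_dyadic_div {μ : Measure (ι → ℝ)}
    [IsProbabilityMeasure μ] {D R : ℝ} (hD : IsExactDimensional μ D) (hR : ∀ᵐ x ∂μ, ‖x‖ ≤ R) :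
    Tendsto (fun m : ℕ => shannonEntropy (μ.map (dyadicIndex fun _ => m)) / m) atTop
      (𝓝 (D * Real.log 2)) := by
  obtain ⟨x₀, hx₀⟩ := hR.exists
  have hR0 : 0 ≤ R := (norm_nonneg x₀).trans hx₀
  set E : ℝ := Fintype.card ι * (Real.log 2 + Real.log (2 * R + 2))
  have hE : 0 ≤ E := mul_nonneg (Nat.cast_nonneg _)
    (add_nonneg (Real.log_nonneg one_le_two) (Real.log_nonneg (by linarith)))
  set C := max (D * Real.log 2) E
  have hC : 0 ≤ C := hE.trans (le_max_right _ _)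
  have hlim := hD.tendsto_integral_ballInformation_div hC (le_max_left _ _)
  have hS : ∀ m : ℕ, ∀ᵐ x ∂μ, dyadicIndex (fun _ => m) x ∈ floorBox 0 fun _ => 2 ^ m * R :=
    fun m => hR.mono fun x hx => dyadicIndex_mem_floorBox _ hx
  have hcell : ∀ (m : ℕ) (x y : ι → ℝ), dyadicIndex (fun _ => m) x = dyadicIndex (fun _ => m) y →
      dist x y ≤ (2 ^ m)⁻¹ := fun m x y h =>
    (dist_pi_le_iff (by positivity)).mpr fun j => abs_sub_le_of_dyadicIndex_eq h j
  refine tendsto_of_tendsto_of_tendsto_of_le_of_le' hlim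
    (by simpa using hlim.add (tendsto_const_div_atTop_nhds_zero_nat (4 ^ Fintype.card ι + 1)))
    (Eventually.of_forall fun m => div_le_div_of_nonneg_right
      (integral_ballInformation_le_shannonEntropy (measurable_dyadicIndex _) (hS m) (hcell m)
        (by positivity)) m.cast_nonneg) ?_
  filter_upwards [eventually_gt_atTop 0] with m hm
  rw [← add_div]
  refine div_le_div_of_nonneg_right ?_ m.cast_nonneg
  have := Measure.isProbabilityMeasure_map (μ := μ)
    (measurable_dyadicIndex fun _ : ι => m).aemeasurable
  refine shannonEntropy_le_integral_ballInformation (measurable_dyadicIndex _) (hS m) (hcell m)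
    (by positivity) ((log_card_floorBox_le hm hR0).trans
      (mul_le_mul_of_nonneg_right (le_max_right _ _) m.cast_nonneg))
    (Q := fun k => Metric.closedBall k 1) (fun x y hxy => ?_)
    (sum_measureReal_closedBall_one_le _ _)
  exact dist_dyadicIndex_le_one hxy

end EntropyDimension

section Stationary

variable {Λ X : Type*} [MeasurableSpace X] {f : Λ → X → X}

/-- The composition of the maps `f i` along a word; the head of the word acts first. -/
def wordMap (f : Λ → X → X) : List Λ → X → X
  | [] => id
  | i :: w => wordMap f w ∘ f i

theorem measurable_wordMap (hf : ∀ i, Measurable (f i)) : ∀ w, Measurable (wordMap f w)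
  | [] => measurable_id
  | i :: w => (measurable_wordMap hf w).comp (hf i)

variable [Fintype Λ] {p : Λ → ℝ} {μ : Measure X}

/-- `μ` is stationary for the maps `f i` chosen with probabilities `p i`. -/
def IsStationaryMeasure (p : Λ → ℝ) (f : Λ → X → X) (μ : Measure X) : Prop :=
  μ = ∑ i, ENNReal.ofReal (p i) • μ.map (f i)

theorem IsStationaryMeasure.map_eq_sum {Y : Type*} [MeasurableSpace Y]
    (hμ : IsStationaryMeasure p f μ) (hf : ∀ i, Measurable (f i)) {h : X → Y} (hh : Measurable h) :
    μ.map h = ∑ i, ENNReal.ofReal (p i) • μ.map (h ∘ f i) := by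
  conv_lhs => rw [hμ]
  rw [Measure.map_finset_sum hh.aemeasurable]
  exact sum_congr rfl fun i _ => by rw [Measure.map_smul, Measure.map_map hh (hf i)]

theorem IsStationaryMeasure.sum_mul_condEntropy_le {κ κ' : Type*} [MeasurableSpace κ]
    [DiscreteMeasurableSpace κ] [MeasurableSpace κ'] [MeasurableSingletonClass κ']
    [IsProbabilityMeasure μ] (hμ : IsStationaryMeasure p f μ) (hf : ∀ i, Measurable (f i))
    (hp0 : ∀ i, 0 ≤ p i) {q : X → κ} (hq : Measurable q) {S : Finset κ}
    (hS : ∀ i, ∀ᵐ x ∂μ, q (f i x) ∈ S) (g : κ → κ') :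
    ∑ i, p i * condEntropy g (μ.map (q ∘ f i)) ≤ condEntropy g (μ.map q) := by
  have hqf : ∀ i, AEMeasurable (q ∘ f i) μ := fun i => (hq.comp (hf i)).aemeasurable
  have hlaw : ∀ i, ∀ᵐ k ∂μ.map (q ∘ f i), k ∈ S := fun i =>
    (ae_map_iff (hqf i) (Finset.measurableSet S)).mpr (hS i)
  have := fun i => Measure.smul_finite (μ.map (q ∘ f i)) (ENNReal.ofReal_ne_top (r := p i))
  rw [hμ.map_eq_sum hf hq]
  refine le_trans (sum_le_sum fun i _ => ?_)
    (sum_condEntropy_le_condEntropy_sum univ (fun i => Measure.ae_smul_measure (hlaw i) _) g)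
  rw [condEntropy_smul (hlaw i) g ENNReal.ofReal_ne_top, ENNReal.toReal_ofReal (hp0 i)]

section BoundedSupport

variable {E : Type*} [SeminormedAddCommGroup E] [MeasurableSpace E] [OpensMeasurableSpace E]
  {F : Λ → E → E} {θ : Measure E} {c A : ℝ}

theorem IsStationaryMeasure.measure_closedBall_le (hθ : IsStationaryMeasure p F θ)
    (hF : ∀ i, Measurable (F i)) (hp0 : ∀ i, 0 ≤ p i) (hp1 : ∑ i, p i = 1) (hc : 0 ≤ c)
    (hcontr : ∀ i x, ‖F i x‖ ≤ c * ‖x‖ + A) (s : ℝ) :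
    θ (Metric.closedBall 0 s) ≤ θ (Metric.closedBall 0 (c * s + A)) := by
  have hsub : ∀ i, Metric.closedBall 0 s ⊆ F i ⁻¹' Metric.closedBall 0 (c * s + A) := by
    intro i x hx
    rw [mem_closedBall_zero_iff] at hx
    rw [Set.mem_preimage, mem_closedBall_zero_iff]
    exact (hcontr i x).trans (by gcongr)
  calc θ (Metric.closedBall 0 s)
      = ∑ i, ENNReal.ofReal (p i) * θ (Metric.closedBall 0 s) := by
        rw [← sum_mul, ← ENNReal.ofReal_sum_of_nonneg fun i _ => hp0 i, hp1, ENNReal.ofReal_one,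
          one_mul]
    _ ≤ ∑ i, ENNReal.ofReal (p i) * θ (F i ⁻¹' Metric.closedBall 0 (c * s + A)) :=
        sum_le_sum fun i _ => by gcongr; exact hsub i
    _ = θ (Metric.closedBall 0 (c * s + A)) := by
        conv_rhs => rw [hθ]
        simp only [Measure.coe_finsetSum, Finset.sum_apply, Measure.smul_apply, smul_eq_mul]
        exact sum_congr rfl fun i _ => by
          rw [Measure.map_apply (hF i) Metric.isClosed_closedBall.measurableSet]

variable [IsProbabilityMeasure θ]

theorem IsStationaryMeasure.ae_norm_le (hθ : IsStationaryMeasure p F θ) (hF : ∀ i, Measurable (F i))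
    (hp0 : ∀ i, 0 ≤ p i) (hp1 : ∑ i, p i = 1) (hc : 0 ≤ c) (hc1 : c < 1)
    (hcontr : ∀ i x, ‖F i x‖ ≤ c * ‖x‖ + A) : ∀ᵐ x ∂θ, ‖x‖ ≤ A / (1 - c) + 1 := by
  set ρ := A / (1 - c) with hρ
  have hA : A = (1 - c) * ρ := by rw [hρ, mul_div_cancel₀ A (sub_pos.mpr hc1).ne']
  have hiter : ∀ (s : ℝ) (n : ℕ),
      θ (Metric.closedBall 0 s) ≤ θ (Metric.closedBall 0 (ρ + c ^ n * (s - ρ))) := by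
    intro s n
    induction n with
    | zero => simp
    | succ n ih =>
      refine (ih.trans (hθ.measure_closedBall_le hF hp0 hp1 hc hcontr _)).trans_eq ?_
      rw [hA]
      ring_nf
  have hball : ∀ s : ℝ, θ (Metric.closedBall 0 s) ≤ θ (Metric.closedBall 0 (ρ + 1)) := by
    intro s
    have hlim : Tendsto (fun n : ℕ => c ^ n * (s - ρ)) atTop (𝓝 0) := by
      simpa using (tendsto_pow_atTop_nhds_zero_of_lt_one hc hc1).mul_const (s - ρ)
    obtain ⟨n, hn⟩ := (hlim.eventually (ge_mem_nhds zero_lt_one)).exists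
    exact (hiter s n).trans
      (measure_mono (Metric.closedBall_subset_closedBall (by linarith)))
  have hone : θ (Metric.closedBall 0 (ρ + 1)) = 1 := by
    refine le_antisymm prob_le_one ?_
    have hmono : Monotone fun n : ℕ => Metric.closedBall (0 : E) n := fun m n hmn =>
      Metric.closedBall_subset_closedBall (Nat.cast_le.mpr hmn)
    rw [← measure_univ (μ := θ), ← Metric.iUnion_closedBall_nat (0 : E), hmono.measure_iUnion]
    exact iSup_le fun n => hball n
  filter_upwards [(prob_compl_eq_zero_iff Metric.isClosed_closedBall.measurableSet).mpr hone] with x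
    using mem_closedBall_zero_iff.mp

theorem IsStationaryMeasure.exists_invariant_norm_bound (hθ : IsStationaryMeasure p F θ)
    (hF : ∀ i, Measurable (F i)) (hp0 : ∀ i, 0 ≤ p i) (hp1 : ∑ i, p i = 1) (hc : 0 ≤ c)
    (hc1 : c < 1) (hcontr : ∀ i x, ‖F i x‖ ≤ c * ‖x‖ + A) :
    ∃ R, (∀ᵐ x ∂θ, ‖x‖ ≤ R) ∧ ∀ i x, ‖x‖ ≤ R → ‖F i x‖ ≤ R := by
  refine ⟨A / (1 - c) + 1, hθ.ae_norm_le hF hp0 hp1 hc hc1 hcontr, fun i x hx => ?_⟩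
  calc ‖F i x‖ ≤ c * (A / (1 - c) + 1) + A := (hcontr i x).trans (by gcongr)
    _ = A / (1 - c) + c := by
        have := (sub_pos.mpr hc1).ne'
        field_simp
        ring
    _ ≤ A / (1 - c) + 1 := by gcongr

end BoundedSupport

-- Optional stopping for the random walk `(w.map t).sum`, by induction on the number of steps
-- that suffice to reach `n`.
theorem le_apply_nil_of_superharmonic {t : Λ → ℝ} {u : List Λ → ℝ} {δ T n c : ℝ}
    (hp0 : ∀ i, 0 ≤ p i) (hp1 : ∑ i, p i = 1) (hu : ∀ w, ∑ i, p i * u (i :: w) ≤ u w)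
    (hδ : 0 < δ) (htδ : ∀ i, δ ≤ t i) (htT : ∀ i, t i ≤ T) (hnT : 0 ≤ n + T)
    (hc : ∀ w : List Λ, n ≤ (w.map t).sum → (w.map t).sum ≤ n + T → c ≤ u w) : c ≤ u [] := by
  have hstep : ∀ (N : ℕ) (w : List Λ), n - N * δ ≤ (w.map t).sum → (w.map t).sum ≤ n + T →
      c ≤ u w := by
    intro N
    induction N with
    | zero => exact fun w hw => hc w (by simpa using hw)
    | succ N ih =>
      intro w hw hwT
      rcases le_or_gt n (w.map t).sum with hn | hn
      · exact hc w hn hwT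
      have hchild : ∀ i, c ≤ u (i :: w) := fun i => by
        push_cast at hw
        refine ih (i :: w) ?_ ?_ <;> rw [List.map_cons, List.sum_cons] <;>
          linarith [htδ i, htT i]
      calc c = ∑ i, p i * c := by rw [← sum_mul, hp1, one_mul]
        _ ≤ ∑ i, p i * u (i :: w) :=
            sum_le_sum fun i _ => mul_le_mul_of_nonneg_left (hchild i) (hp0 i)
        _ ≤ u w := hu w
  obtain ⟨N, hN⟩ := exists_nat_ge (n / δ)
  rw [div_le_iff₀ hδ] at hN
  exact hstep N [] (by simpa using hN) (by simpa using hnT)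

theorem IsStationaryMeasure.le_condEntropy_of_forall_word {κ κ' : Type*} [MeasurableSpace κ]
    [DiscreteMeasurableSpace κ] [MeasurableSpace κ'] [MeasurableSingletonClass κ']
    [IsProbabilityMeasure μ] (hμ : IsStationaryMeasure p f μ) (hf : ∀ i, Measurable (f i))
    (hp0 : ∀ i, 0 ≤ p i) (hp1 : ∑ i, p i = 1) {q : X → κ} (hq : Measurable q) {S : Finset κ}
    (hS : ∀ w, ∀ᵐ x ∂μ, q (wordMap f w x) ∈ S) (g : κ → κ') {t : Λ → ℝ} {δ T n c : ℝ}
    (hδ : 0 < δ) (htδ : ∀ i, δ ≤ t i) (htT : ∀ i, t i ≤ T) (hnT : 0 ≤ n + T)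
    (hc : ∀ w : List Λ, n ≤ (w.map t).sum → (w.map t).sum ≤ n + T →
      c ≤ condEntropy g (μ.map (q ∘ wordMap f w))) :
    c ≤ condEntropy g (μ.map q) :=
  le_apply_nil_of_superharmonic (u := fun w => condEntropy g (μ.map (q ∘ wordMap f w))) hp0 hp1
    (fun w => hμ.sum_mul_condEntropy_le hf hp0 (hq.comp (measurable_wordMap hf w))
      (fun i => hS (i :: w)) g) hδ htδ htT hnT hc

end Stationary

section AxisScaling

variable {ι : Type*} {χ : ι → ℝ} {s : ℝ} {g : (ι → ℝ) → ι → ℝ}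

/-- The map `g` scales distances in the direction `j` by the factor `2 ^ (-s * χ j)`: the linear
part of `g` is, up to signs, the element with time `s` of the one-parameter group with
exponents `χ`. -/
def IsAxisScaling (χ : ι → ℝ) (s : ℝ) (g : (ι → ℝ) → ι → ℝ) : Prop :=
  ∀ x y j, |g x j - g y j| = 2 ^ (-(s * χ j)) * |x j - y j|

theorem isAxisScaling_wordMap {Λ : Type*} {f : Λ → (ι → ℝ) → ι → ℝ} {t : Λ → ℝ}
    (hf : ∀ i, IsAxisScaling χ (t i) (f i)) :
    ∀ w : List Λ, IsAxisScaling χ (w.map t).sum (wordMap f w)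
  | [] => fun x y j => by simp [wordMap]
  | i :: w => fun x y j => by
      rw [wordMap, Function.comp_apply, Function.comp_apply, isAxisScaling_wordMap hf w, hf i,
        ← mul_assoc, ← Real.rpow_add two_pos, List.map_cons, List.sum_cons]
      ring_nf

theorem IsAxisScaling.abs_sub_eq (hg : IsAxisScaling χ s g) (x y : ι → ℝ) (j : ι) :
    |x j - y j| = 2 ^ (s * χ j) * |g x j - g y j| := by
  rw [hg, ← mul_assoc, ← Real.rpow_add two_pos, add_neg_cancel, Real.rpow_zero, one_mul]

theorem IsAxisScaling.measurable (hg : IsAxisScaling χ s g) : Measurable g := by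
  refine measurable_pi_lambda _ fun j => ?_
  have hcoord : (fun x => g x j) = (fun y : ℝ => g (fun _ => y) j) ∘ fun x => x j := by
    refine funext fun x => sub_eq_zero.mp (abs_eq_zero.mp ?_)
    rw [Function.comp_apply, hg, sub_self, abs_zero, mul_zero]
  have hlip : LipschitzWith (2 ^ (-(s * χ j)) : ℝ).toNNReal fun y : ℝ => g (fun _ => y) j :=
    LipschitzWith.of_dist_le' fun y z => by rw [Real.dist_eq, hg, Real.dist_eq]
  rw [hcoord]
  exact hlip.continuous.measurable.comp (measurable_pi_apply j)

variable [Fintype ι]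

theorem exists_contraction_of_isAxisScaling {Λ : Type*} [Finite Λ] {f : Λ → (ι → ℝ) → ι → ℝ}
    {t : Λ → ℝ} (hf : ∀ i, IsAxisScaling χ (t i) (f i)) (ht : ∀ i, 0 < t i) (hχ : ∀ j, 0 < χ j) :
    ∃ c A : ℝ, 0 ≤ c ∧ c < 1 ∧ ∀ i x, ‖f i x‖ ≤ c * ‖x‖ + A := by
  obtain ⟨⟨c, hc0, hc1⟩, hc⟩ := Finite.exists_le fun z : Λ × ι =>
    (⟨2 ^ (-(t z.1 * χ z.2)), by positivity, Real.rpow_lt_one_of_one_lt_of_neg one_lt_two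
      (neg_neg_iff_pos.mpr (mul_pos (ht z.1) (hχ z.2)))⟩ : Set.Ico (0 : ℝ) 1)
  obtain ⟨A, hA⟩ := Finite.exists_le fun i => ‖f i 0‖
  have hA0 : ∀ _ : Λ, 0 ≤ A := fun i => (norm_nonneg _).trans (hA i)
  refine ⟨c, A, hc0, hc1, fun i x =>
    (pi_norm_le_iff_of_nonneg (add_nonneg (mul_nonneg hc0 (norm_nonneg x)) (hA0 i))).mpr
      fun j => ?_⟩
  have hlin : ‖f i x j - f i 0 j‖ ≤ c * ‖x‖ := by
    rw [Real.norm_eq_abs, hf i, Pi.zero_apply, sub_zero]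
    exact mul_le_mul (hc (i, j)) (norm_le_pi_norm x j) (abs_nonneg _) hc0
  calc ‖f i x j‖ = ‖(f i x j - f i 0 j) + f i 0 j‖ := by rw [sub_add_cancel]
    _ ≤ c * ‖x‖ + A := norm_add_le_of_le hlin ((norm_le_pi_norm (f i 0) j).trans (hA i))

theorem norm_wordMap_le {Λ E : Type*} [Norm E] {f : Λ → E → E} {R : ℝ}
    (hf : ∀ i x, ‖x‖ ≤ R → ‖f i x‖ ≤ R) : ∀ (w : List Λ) (x : E), ‖x‖ ≤ R → ‖wordMap f w x‖ ≤ R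
  | [], _, hx => hx
  | i :: w, x, hx => norm_wordMap_le hf w (f i x) (hf i x hx)

section EntropyBounds

variable {μ : Measure (ι → ℝ)} [IsProbabilityMeasure μ] {R : ℝ} {l m : ι → ℕ}

theorem shannonEntropy_map_dyadicIndex_le_add (hR : ∀ᵐ x ∂μ, ‖x‖ ≤ R) (hlm : l ≤ m) :
    shannonEntropy (μ.map (dyadicIndex m)) ≤ shannonEntropy (μ.map (dyadicIndex l)) +
      ∑ j, (Real.log 4 + ((m j : ℝ) - l j) * Real.log 2) := by
  refine (shannonEntropy_map_floor_le (h := fun x j => 2 ^ m j * x j)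
    (L := fun j => 2 ^ ((m j : ℝ) - l j)) (measurable_dyadicIndex l) (by fun_prop) hR
    (fun x hx => dyadicIndex_mem_floorBox l hx) fun x _ y _ hxy j => ?_).trans ?_
  · rw [← mul_sub, abs_mul, abs_of_pos (by positivity), Real.rpow_sub two_pos,
      Real.rpow_natCast, Real.rpow_natCast, div_eq_mul_inv]
    gcongr
    exact abs_sub_le_of_dyadicIndex_eq hxy j
  · gcongr with j
    exact log_two_mul_two_rpow_add_two_le (sub_nonneg.mpr (Nat.cast_le.mpr (hlm j)))

theorem shannonEntropy_map_dyadicIndex_subtype_le (hg : IsAxisScaling χ s g)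
    (hR : ∀ᵐ x ∂μ, ‖x‖ ≤ R) (hgR : ∀ x, ‖x‖ ≤ R → ‖g x‖ ≤ R) (hs : ∀ j, 0 ≤ s * χ j)
    (m : ι → ℕ) (J : ι → Prop) [DecidablePred J] :
    shannonEntropy ((μ.map fun (x : ι → ℝ) (j : {j // J j}) => x j).map
        (dyadicIndex fun j : {j // J j} => m j)) ≤
      shannonEntropy (μ.map (dyadicIndex m ∘ g)) +
        ∑ j : {j // J j}, (Real.log 4 + s * χ j * Real.log 2) := by
  rw [Measure.map_map (measurable_dyadicIndex _) (by fun_prop)]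
  refine (shannonEntropy_map_floor_le (h := fun x (j : {j // J j}) => 2 ^ m j * x j)
    (L := fun j => 2 ^ (s * χ j)) ((measurable_dyadicIndex m).comp hg.measurable) (by fun_prop) hR
    (fun x hx => dyadicIndex_mem_floorBox m (hgR x hx)) fun x _ y _ hxy j => ?_).trans ?_
  · rw [← mul_sub, abs_mul, abs_of_pos (by positivity), hg.abs_sub_eq x y j]
    have hcell := abs_sub_le_of_dyadicIndex_eq hxy j
    calc (2 : ℝ) ^ m j * (2 ^ (s * χ j) * |g x j - g y j|)
        ≤ 2 ^ m j * (2 ^ (s * χ j) * (2 ^ m j)⁻¹) := by gcongr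
      _ = 2 ^ (s * χ j) := by field_simp
  · gcongr with j
    exact log_two_mul_two_rpow_add_two_le (hs j)

theorem shannonEntropy_map_dyadicIndex_comp_le (hg : IsAxisScaling χ s g)
    (hR : ∀ᵐ x ∂μ, ‖x‖ ≤ R) (hl : ∀ j, (l j : ℝ) ≤ s * χ j) :
    shannonEntropy (μ.map (dyadicIndex l ∘ g)) ≤ Fintype.card ι * Real.log (4 * R + 2) := by
  have := Measure.isProbabilityMeasure_map (μ := μ) (f := fun _ => ()) (by fun_prop)
  refine (shannonEntropy_map_floor_le (q := fun _ => ()) (h := fun x j => 2 ^ l j * g x j)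
    (L := fun _ => 2 * R) (S := univ) (by fun_prop) ?_ hR (fun _ _ => mem_univ _)
    fun x hx y hy _ j => ?_).trans_eq ?_
  · exact measurable_pi_lambda _ fun j => (measurable_pi_iff.mp hg.measurable j).const_mul _
  · have hfactor : (2 : ℝ) ^ l j * 2 ^ (-(s * χ j)) ≤ 1 := by
      rw [← Real.rpow_natCast, ← Real.rpow_add two_pos]
      exact Real.rpow_le_one_of_one_le_of_nonpos one_le_two (by linarith [hl j])
    have hdiam : |x j - y j| ≤ 2 * R := by
      have := (abs_sub _ _).trans (add_le_add ((norm_le_pi_norm x j).trans hx)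
        ((norm_le_pi_norm y j).trans hy))
      linarith
    rw [← mul_sub, abs_mul, abs_of_pos (by positivity), hg, ← mul_assoc]
    exact (mul_le_of_le_one_left (abs_nonneg _) hfactor).trans hdiam
  · rw [shannonEntropy_unit, zero_add, sum_const, card_univ, nsmul_eq_mul, ← mul_assoc]
    norm_num

end EntropyBounds

end AxisScaling

section Limit

variable {Λ ι : Type*} [Fintype Λ] [Fintype ι] {p t : Λ → ℝ} {f : Λ → (ι → ℝ) → ι → ℝ} {χ : ι → ℝ}
  {μ : Measure (ι → ℝ)} [IsProbabilityMeasure μ] {R : ℝ}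

theorem IsStationaryMeasure.shannonEntropy_subtype_sub_le (hμ : IsStationaryMeasure p f μ)
    (hp0 : ∀ i, 0 ≤ p i) (hp1 : ∑ i, p i = 1) (hf : ∀ i, IsAxisScaling χ (t i) (f i))
    (ht : ∀ i, 0 < t i) {T : ℝ} (hT : ∀ i, t i ≤ T) (hT0 : 0 ≤ T) (hχ : ∀ j, 0 ≤ χ j)
    (hR : ∀ᵐ x ∂μ, ‖x‖ ≤ R) (hfR : ∀ i x, ‖x‖ ≤ R → ‖f i x‖ ≤ R) {n : ℝ} (hn : 0 ≤ n)
    {l m : ι → ℕ} (hlm : l ≤ m) (hl : ∀ j, (l j : ℝ) ≤ χ j * n) (J : ι → Prop) [DecidablePred J] :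
    shannonEntropy ((μ.map fun (x : ι → ℝ) (j : {j // J j}) => x j).map
        (dyadicIndex fun j : {j // J j} => m j)) -
        ∑ j : {j // J j}, (Real.log 4 + (n + T) * χ j * Real.log 2) -
        Fintype.card ι * Real.log (4 * R + 2) ≤
      shannonEntropy (μ.map (dyadicIndex m)) - shannonEntropy (μ.map (dyadicIndex l)) := by
  obtain ⟨g, hg⟩ := exists_dyadicIndex_eq_comp hlm
  obtain ⟨⟨δ, hδ⟩, htδ⟩ := Finite.exists_ge fun i => (⟨t i, ht i⟩ : Set.Ioi (0 : ℝ))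
  have hcond : ∀ h : (ι → ℝ) → ι → ℝ, Measurable h → condEntropy g (μ.map (dyadicIndex m ∘ h)) =
      shannonEntropy (μ.map (dyadicIndex m ∘ h)) - shannonEntropy (μ.map (dyadicIndex l ∘ h)) :=
    fun h hh => by
      rw [condEntropy, Measure.map_map .of_discrete ((measurable_dyadicIndex m).comp hh), hg,
        Function.comp_assoc]
  have hmain := hcond id measurable_id
  simp only [Function.comp_id] at hmain
  rw [← hmain]
  -- Words are stopped when their time passes `n`: by then the image of `μ` meets boundedly many
  -- cells of level `l`, and `m` still resolves `μ` itself in the directions `J`.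
  refine hμ.le_condEntropy_of_forall_word (n := n) (fun i => (hf i).measurable) hp0 hp1
    (measurable_dyadicIndex m) (fun w => hR.mono fun x hx =>
      dyadicIndex_mem_floorBox m (norm_wordMap_le hfR w x hx)) g hδ htδ hT (by positivity)
    fun w hnw hwT => ?_
  have hw := isAxisScaling_wordMap hf w
  have hproj := shannonEntropy_map_dyadicIndex_subtype_le hw hR (norm_wordMap_le hfR w)
    (fun j => mul_nonneg (hn.trans hnw) (hχ j)) m J
  have hdiam := shannonEntropy_map_dyadicIndex_comp_le hw hR fun j =>
    (hl j).trans ((mul_comm _ _).trans_le (mul_le_mul_of_nonneg_right hnw (hχ j)))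
  have htime : ∑ j : {j // J j}, (Real.log 4 + (w.map t).sum * χ j * Real.log 2) ≤
      ∑ j : {j // J j}, (Real.log 4 + (n + T) * χ j * Real.log 2) := by
    gcongr with j
    exact hχ j
  rw [hcond _ hw.measurable]
  linarith

theorem tendsto_comp_natFloor_mul_div {h : ℕ → ℝ} {L c : ℝ} (hc : 0 < c)
    (hh : Tendsto (fun m : ℕ => h m / m) atTop (𝓝 L)) :
    Tendsto (fun n : ℕ => h ⌊c * n⌋₊ / n) atTop (𝓝 (c * L)) := by
  have hfloor : Tendsto (fun n : ℕ => ⌊c * n⌋₊) atTop atTop :=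
    tendsto_nat_floor_atTop.comp (tendsto_natCast_atTop_atTop.const_mul_atTop hc)
  rw [mul_comm c L]
  refine ((hh.comp hfloor).mul ((tendsto_nat_floor_mul_div_atTop hc.le).comp
    tendsto_natCast_atTop_atTop)).congr' ?_
  filter_upwards [hfloor.eventually_gt_atTop 0] with n hn
  exact div_mul_div_cancel₀ (Nat.cast_pos.mpr hn).ne'

theorem tendsto_natFloor_mul_div {c : ℝ} (hc : 0 ≤ c) :
    Tendsto (fun n : ℕ => (⌊c * n⌋₊ : ℝ) / n) atTop (𝓝 c) :=
  (tendsto_nat_floor_mul_div_atTop hc).comp tendsto_natCast_atTop_atTop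

theorem tendsto_sum_add_mul_div {u : ℕ → ι → ℝ} {v : ι → ℝ}
    (hu : ∀ j, Tendsto (fun n : ℕ => u n j / n) atTop (𝓝 (v j))) (a b : ℝ) :
    Tendsto (fun n : ℕ => (∑ j, (a + u n j * b)) / n) atTop (𝓝 (∑ j, v j * b)) := by
  simp only [sum_div, add_div, mul_div_right_comm]
  refine tendsto_finsetSum _ fun j _ => ?_
  simpa only [zero_add] using (tendsto_const_div_atTop_nhds_zero_nat a).add ((hu j).mul_const b)

theorem IsExactDimensional.tendsto_shannonEntropy_natFloor_div {D c : ℝ}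
    (hD : IsExactDimensional μ D) (hR : ∀ᵐ x ∂μ, ‖x‖ ≤ R) (hc : 0 < c) :
    Tendsto (fun n : ℕ => shannonEntropy (μ.map (dyadicIndex fun _ => ⌊c * n⌋₊)) / n) atTop
      (𝓝 (c * (D * Real.log 2))) :=
  tendsto_comp_natFloor_mul_div (h := fun m => shannonEntropy (μ.map (dyadicIndex fun _ => m))) hc
    (hD.tendsto_shannonEntropy_dyadic_div hR)

theorem ae_norm_map_subtype_le {ν : Measure (ι → ℝ)} (J : ι → Prop) [DecidablePred J]
    (hR : ∀ᵐ x ∂ν, ‖x‖ ≤ R) :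
    ∀ᵐ y ∂ν.map fun (x : ι → ℝ) (j : {j // J j}) => x j, ‖y‖ ≤ R := by
  rw [ae_map_iff (Measurable.aemeasurable (by fun_prop))
    (measurableSet_le measurable_norm measurable_const)]
  filter_upwards [hR] with x hx
  exact (pi_norm_le_iff_of_nonneg ((norm_nonneg x).trans hx)).mpr fun j =>
    (norm_le_pi_norm x j).trans hx

theorem sum_sub_eq_sum_filter_sub {J : ι → Prop} [DecidablePred J] {k : ι}
    (hJ : ∀ j, ¬J j → χ j = χ k) : ∑ j, (χ k - χ j) = ∑ j with J j, (χ k - χ j) :=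
  (sum_filter_of_ne fun j _ hj => by_contra fun h => hj (by rw [hJ j h, sub_self])).symm

theorem card_subtype_mul_sub_sum_subtype (J : ι → Prop) [DecidablePred J] (a : ℝ) :
    a * Fintype.card {j // J j} - ∑ j : {j // J j}, χ j = ∑ j with J j, (a - χ j) := by
  rw [sum_subtype (p := J) _ (by simp) fun j => a - χ j, sum_sub_distrib, sum_const, card_univ,
    nsmul_eq_mul, mul_comm]

theorem IsExactDimensional.tendsto_shannonEntropy_sub_refinement_div {D : ℝ}
    (hD : IsExactDimensional μ D) (hR : ∀ᵐ x ∂μ, ‖x‖ ≤ R) (hχ : ∀ j, 0 < χ j) (k : ι) :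
    Tendsto (fun n : ℕ => (shannonEntropy (μ.map (dyadicIndex fun _ => ⌊χ k * n⌋₊)) -
        ∑ j, (Real.log 4 + ((⌊χ k * n⌋₊ : ℝ) - ⌊χ j * n⌋₊) * Real.log 2)) / n) atTop
      (𝓝 ((χ k * D - ∑ j, (χ k - χ j)) * Real.log 2)) := by
  rw [sub_mul, mul_assoc, sum_mul]
  simp only [sub_div]
  refine (hD.tendsto_shannonEntropy_natFloor_div hR (hχ k)).sub
    (tendsto_sum_add_mul_div (fun j => ?_) _ _)
  simpa only [sub_div] using
    (tendsto_natFloor_mul_div (hχ k).le).sub (tendsto_natFloor_mul_div (hχ j).le)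

theorem IsExactDimensional.tendsto_shannonEntropy_sub_subtype_div {D : ℝ}
    (hD : IsExactDimensional μ D) (hR : ∀ᵐ x ∂μ, ‖x‖ ≤ R) {k : ι} (hk : 0 < χ k) {J : ι → Prop}
    [DecidablePred J] (hDJ : IsExactDimensional (μ.map fun (x : ι → ℝ) (j : {j // J j}) => x j)
      (Fintype.card {j // J j})) (T C : ℝ) :
    Tendsto (fun n : ℕ => (shannonEntropy (μ.map (dyadicIndex fun _ => ⌊χ k * n⌋₊)) -
        (shannonEntropy ((μ.map fun (x : ι → ℝ) (j : {j // J j}) => x j).map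
            (dyadicIndex fun _ => ⌊χ k * n⌋₊)) -
          ∑ j : {j // J j}, (Real.log 4 + (n + T) * χ j * Real.log 2) - C)) / n) atTop
      (𝓝 ((χ k * D - ∑ j with J j, (χ k - χ j)) * Real.log 2)) := by
  have := Measure.isProbabilityMeasure_map (μ := μ)
    (f := fun (x : ι → ℝ) (j : {j // J j}) => x j) (Measurable.aemeasurable (by fun_prop))
  have htime : ∀ j, Tendsto (fun n : ℕ => (n + T) * χ j / n) atTop (𝓝 (χ j)) := fun j => by
    have := (tendsto_const_div_atTop_nhds_zero_nat (T * χ j)).const_add (χ j)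
    rw [add_zero] at this
    refine this.congr' ?_
    filter_upwards [eventually_ne_atTop 0] with n hn
    field_simp
  have hlim := (hD.tendsto_shannonEntropy_natFloor_div hR hk).sub
    (((hDJ.tendsto_shannonEntropy_natFloor_div (ae_norm_map_subtype_le J hR) hk).sub
      (tendsto_sum_add_mul_div (fun j : {j // J j} => htime j) (Real.log 4) (Real.log 2))).sub
      (tendsto_const_div_atTop_nhds_zero_nat C))
  simp only [sub_div]
  convert hlim using 2
  rw [← card_subtype_mul_sub_sum_subtype, ← sum_mul]
  ring

theorem IsStationaryMeasure.tendsto_shannonEntropy_nonconformal_div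
    (hμ : IsStationaryMeasure p f μ) (hp0 : ∀ i, 0 ≤ p i) (hp1 : ∑ i, p i = 1)
    (hf : ∀ i, IsAxisScaling χ (t i) (f i)) (ht : ∀ i, 0 < t i) (hχ : ∀ j, 0 < χ j)
    {D : ℝ} (hD : IsExactDimensional μ D) {k : ι} (hk : ∀ j, χ j ≤ χ k) (J : ι → Prop)
    [DecidablePred J] (hJ : ∀ j, ¬J j → χ j = χ k)
    (hDJ : IsExactDimensional (μ.map fun (x : ι → ℝ) (j : {j // J j}) => x j)
      (Fintype.card {j // J j})) :
    Tendsto (fun n : ℕ => shannonEntropy (μ.map (dyadicIndex fun j => ⌊χ j * n⌋₊)) / n) atTop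
      (𝓝 ((χ k * D - ∑ j with J j, (χ k - χ j)) * Real.log 2)) := by
  obtain ⟨c, A, hc0, hc1, hcontr⟩ := exists_contraction_of_isAxisScaling hf ht hχ
  obtain ⟨R, hR, hfR⟩ := hμ.exists_invariant_norm_bound (fun i => (hf i).measurable) hp0 hp1 hc0
    hc1 hcontr
  obtain ⟨T, hT⟩ := Finite.exists_le t
  have hT0 : 0 ≤ T := by
    obtain ⟨i, -⟩ := nonempty_of_sum_ne_zero (hp1.trans_ne one_ne_zero)
    exact (ht i).le.trans (hT i)
  have hlevel : ∀ n : ℕ, (fun j => ⌊χ j * n⌋₊) ≤ fun _ => ⌊χ k * n⌋₊ := fun n j =>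
    Nat.floor_mono (mul_le_mul_of_nonneg_right (hk j) n.cast_nonneg)
  have hlower := hD.tendsto_shannonEntropy_sub_refinement_div hR hχ k
  rw [sum_sub_eq_sum_filter_sub hJ] at hlower
  refine tendsto_of_tendsto_of_tendsto_of_le_of_le hlower
    (hD.tendsto_shannonEntropy_sub_subtype_div hR (hχ k) hDJ T
      (Fintype.card ι * Real.log (4 * R + 2))) (fun n => ?_) fun n => ?_
  · exact div_le_div_of_nonneg_right
      (sub_le_iff_le_add.mpr (shannonEntropy_map_dyadicIndex_le_add hR (hlevel n))) n.cast_nonneg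
  · exact div_le_div_of_nonneg_right
      (le_sub_comm.mp (hμ.shannonEntropy_subtype_sub_le hp0 hp1 hf ht hT hT0 (fun j => (hχ j).le)
        hR hfR n.cast_nonneg (hlevel n)
        (fun j => Nat.floor_le (mul_nonneg (hχ j).le n.cast_nonneg)) J)) n.cast_nonneg

end Limit

section SelfAffine

variable {d : ℕ} {χ : Fin d → ℝ}

theorem Ecell_eq_preimage_dyadicIndex (hχ : ∀ j, 0 ≤ χ j) (n : ℕ) (k : Fin d → ℤ) :
    Ecell d χ n k = dyadicIndex (fun j => ⌊χ j * n⌋₊) ⁻¹' {k} := by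
  ext x
  simp only [Ecell, Set.mem_ofPred_eq, Set.mem_preimage, Set.mem_singleton_iff, dyadicIndex,
    funext_iff]
  refine forall_congr' fun j => ?_
  have hpos : (0 : ℝ) < 2 ^ ⌊χ j * n⌋₊ := by positivity
  rw [← Int.natCast_floor_eq_floor (mul_nonneg (hχ j) n.cast_nonneg), zpow_natCast,
    Int.floor_eq_iff, div_le_iff₀ hpos, lt_div_iff₀ hpos, mul_comm (x j)]

theorem entE_eq_shannonEntropy_div (hχ : ∀ j, 0 ≤ χ j) (n : ℕ) (μ : Measure (Fin d → ℝ)) :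
    entE d χ n μ =
      shannonEntropy (μ.map (dyadicIndex fun j => ⌊χ j * n⌋₊)) / Real.log 2 := by
  rw [entE, shannonEntropy, ← tsum_div_const]
  refine tsum_congr fun k => ?_
  rw [Ecell_eq_preimage_dyadicIndex hχ, Real.negMulLog, Real.logb, map_measureReal_apply
    (measurable_dyadicIndex _) (measurableSet_singleton k), Measure.real]
  ring

theorem isAxisScaling_mul_add {ι : Type*} {χ r : ι → ℝ} {s : ℝ} (hr : ∀ j, r j ≠ 0)
    (hs : ∀ j, -Real.logb 2 |r j| = s * χ j) (a : ι → ℝ) :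
    IsAxisScaling χ s fun x j => r j * x j + a j := fun x y j => by
  rw [← hs j, neg_neg, Real.rpow_logb two_pos (by norm_num) (abs_pos.mpr (hr j)), ← abs_mul]
  ring_nf

theorem sum_mul_neg_logb_pos {Λ : Type*} [Fintype Λ] {p r : Λ → ℝ} (hp0 : ∀ i, 0 ≤ p i)
    (hp1 : ∑ i, p i = 1) (hr : ∀ i, r i ≠ 0 ∧ |r i| < 1) :
    0 < -∑ i, p i * Real.logb 2 |r i| := by
  have hlog : ∀ i, Real.logb 2 |r i| < 0 := fun i =>
    Real.logb_neg one_lt_two (abs_pos.mpr (hr i).1) (hr i).2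
  obtain ⟨i, hi, hpi⟩ := exists_ne_zero_of_sum_ne_zero (hp1.trans_ne one_ne_zero)
  exact neg_pos.mpr (sum_neg' (fun i _ => mul_nonpos_of_nonneg_of_nonpos (hp0 i) (hlog i).le)
    ⟨i, hi, mul_neg_of_pos_of_neg ((hp0 i).lt_of_ne' hpi) (hlog i)⟩)

theorem stmt17_general {Λ : Type*} [Fintype Λ] {d : ℕ} (r a : Λ → Fin d → ℝ)
    (hr : ∀ i j, r i j ≠ 0 ∧ |r i j| < 1) (p : Λ → ℝ) (hp0 : ∀ i, 0 ≤ p i)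
    (hp1 : ∑ i, p i = 1) (χ : Fin d → ℝ)
    (hχdef : ∀ j, χ j = -∑ i, p i * Real.logb 2 |r i j|)
    (hsub : ∀ i, ∃ t : ℝ, 0 < t ∧ ∀ j, -Real.logb 2 |r i j| = t * χ j)
    (μ : Measure (Fin d → ℝ)) [IsProbabilityMeasure μ]
    (hμ : IsStationaryMeasure p (fun i x j => r i j * x j + a i j) μ)
    {D : ℝ} (hD : IsExactDimensional μ D) {k : Fin d} (hk : ∀ j, χ j ≤ χ k)
    (J : Fin d → Prop) [DecidablePred J] (hJ : ∀ j, ¬J j → χ j = χ k)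
    (hDJ : IsExactDimensional (μ.map fun (x : Fin d → ℝ) (j : {j // J j}) => x j)
      (Fintype.card {j // J j})) :
    Tendsto (fun n : ℕ => 1 / n * entE d χ n μ) atTop
      (𝓝 (χ k * D - ∑ j with J j, (χ k - χ j))) := by
  choose t ht htχ using hsub
  have hχ : ∀ j, 0 < χ j := fun j =>
    (sum_mul_neg_logb_pos hp0 hp1 fun i => hr i j).trans_eq (hχdef j).symm
  have hlim := (hμ.tendsto_shannonEntropy_nonconformal_div hp0 hp1
    (fun i => isAxisScaling_mul_add (fun j => (hr i j).1) (htχ i) (a i)) ht hχ hD hk J hJ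
    hDJ).div_const (Real.log 2)
  rw [mul_div_cancel_right₀ _ (Real.log_pos one_lt_two).ne'] at hlim
  refine hlim.congr fun n => ?_
  rw [entE_eq_shannonEntropy_div fun j => (hχ j).le, one_div_mul_eq_div, div_right_comm]

theorem card_subtype_val_lt_sub_one (hd : 1 ≤ d) :
    (Fintype.card {j : Fin d // (j : ℕ) < d - 1} : ℝ) = d - 1 := by
  rw [Fintype.card_subtype, Fin.card_filter_val_lt, min_eq_right (Nat.sub_le d 1),
    Nat.cast_sub hd, Nat.cast_one]

end SelfAffine

/-- Lemma 4.1 of the paper: for a diagonal self-affine measure `μ` on `ℝ^d` with distinct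
Lyapunov exponents `χ₁ < … < χ_d`, linear parts in a 1-dimensional subgroup, and
`dim π_{[d−1]}μ = d−1`, one has `lim (1/n)H(μ,𝓔_n) = κ` where
`κ = χ_d · dim μ − Σ_{j<d}(χ_d − χ_j)`. -/
theorem stmt17 {Λ : Type*} [Fintype Λ] [Nonempty Λ] (d : ℕ) (hd : 1 ≤ d)
    (r a : Λ → Fin d → ℝ) (hr : ∀ i j, r i j ≠ 0 ∧ |r i j| < 1)
    (p : Λ → ℝ) (hp0 : ∀ i, 0 < p i) (hp1 : ∑ i, p i = 1)
    (χ : Fin d → ℝ) (hχdef : ∀ j, χ j = -∑ i, p i * Real.logb 2 |r i j|)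
    (hχinc : StrictMono χ)
    (hsub : ∀ i : Λ, ∃ t : ℝ, 0 < t ∧ ∀ j, -Real.logb 2 |r i j| = t * χ j)
    (μ : Measure (Fin d → ℝ)) (hμprob : IsProbabilityMeasure μ)
    (hμsa : μ = ∑ i : Λ, ENNReal.ofReal (p i) •
      Measure.map (fun x : Fin d → ℝ => fun j => r i j * x j + a i j) μ)
    (Dμ : ℝ)
    (hdimμ : ∀ᵐ x ∂μ, Filter.Tendsto
      (fun δ : ℝ => Real.log ((μ (Metric.closedBall x δ)).toReal) / Real.log δ)
      (nhdsWithin 0 (Set.Ioi 0)) (nhds Dμ))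
    (hdimproj : ∀ᵐ x ∂(Measure.map
        (fun (x : Fin d → ℝ) (j : {j : Fin d // (j : ℕ) < d - 1}) => x j) μ),
      Filter.Tendsto
        (fun δ : ℝ => Real.log
            ((Measure.map
              (fun (x : Fin d → ℝ) (j : {j : Fin d // (j : ℕ) < d - 1}) => x j) μ
              (Metric.closedBall x δ)).toReal) / Real.log δ)
        (nhdsWithin 0 (Set.Ioi 0)) (nhds ((d : ℝ) - 1))) :
    Filter.Tendsto (fun n : ℕ => (1 / (n : ℝ)) * entE d χ n μ) Filter.atTop
      (nhds (χ ⟨d - 1, Nat.sub_lt hd one_pos⟩ * Dμ -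
        ∑ j ∈ univ.filter (fun j : Fin d => (j : ℕ) < d - 1),
          (χ ⟨d - 1, Nat.sub_lt hd one_pos⟩ - χ j))) := by
  have hlast : ∀ j : Fin d, j ≤ ⟨d - 1, Nat.sub_lt hd one_pos⟩ := fun j => Nat.le_sub_one_of_lt j.2
  rw [← card_subtype_val_lt_sub_one hd] at hdimproj
  exact stmt17_general r a hr p (fun i => (hp0 i).le) hp1 χ hχdef hsub μ hμsa hdimμ
    (fun j => hχinc.monotone (hlast j)) (fun j => (j : ℕ) < d - 1)
    (fun j hj => congrArg χ (le_antisymm (hlast j) (not_lt.mp hj))) hdimproj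
end
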